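/- Suppose (L, K) is a Mackey pair of Hopf subalgebras of H. Then for any finite-dimensional left K-module M and any finite-dimensional left L-module N there is a canonical isomorphism of H-modules M↑_K^H ⊗ N↑_L^H ≅ ⊕_{C ∈ L\H/K} (( (CK ⊗_K M)↓_{L ∩ {}^C K} ⊗ N↓_{L ∩ {}^C K} ))↑_{L ∩ {}^C K}^H, where on the left the tensor product of H-modules is taken via the comultiplication of H, {}^C M = CK ⊗_K M is restricted from {}^C K to L ∩ {}^C K, and N is restricted from L to L ∩ {}^C K. -/

import Mathlib

open TensorProduct

namespace MackeyPaper

noncomputable section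

universe v

variable (k : Type) [Field k] [CharZero k] [IsAlgClosed k]
variable (H : Type) [Ring H] [HopfAlgebra k H]

/-- A subcoalgebra of `H`: a `k`-subspace `C` with `Δ(C) ⊆ C ⊗ C`. -/
def IsSubcoalgebra (C : Submodule k H) : Prop :=
  ∀ c ∈ C, Coalgebra.comul (R := k) c ∈
    LinearMap.range (TensorProduct.map C.subtype C.subtype)

/-- A simple (nonzero, minimal) subcoalgebra of `H`. -/
def IsSimpleSubcoalgebra (C : Submodule k H) : Prop :=
  IsSubcoalgebra k H C ∧ C ≠ ⊥ ∧
    ∀ D : Submodule k H, D ≤ C → IsSubcoalgebra k H D → D ≠ ⊥ → D = C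

/-- A Hopf subalgebra of `H`: a subalgebra which is a subcoalgebra and is
stable under the antipode. -/
def IsHopfSubalgebra (K : Subalgebra k H) : Prop :=
  IsSubcoalgebra k H K.toSubmodule ∧ ∀ x ∈ K, HopfAlgebra.antipode (R := k) x ∈ K

/-- `Λ` is the (two-sided) idempotent integral of the Hopf subalgebra `K`,
i.e. the integral normalized by `ε(Λ) = 1`. -/
def IsIdempotentIntegral (K : Subalgebra k H) (Λ : H) : Prop :=
  Λ ∈ K ∧ Coalgebra.counit (R := k) Λ = 1 ∧
    ∀ x ∈ K, x * Λ = Coalgebra.counit (R := k) x • Λ ∧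
      Λ * x = Coalgebra.counit (R := k) x • Λ

/-- A cocommutative element of `H`; the cocommutative elements of `H` form
the character ring `C(H^*)`. -/
def IsCocomm (x : H) : Prop :=
  (TensorProduct.comm k H H) (Coalgebra.comul (R := k) x) = Coalgebra.comul (R := k) x

/-- The character ring `C(H^*)`, i.e. the space of cocommutative elements of `H`,
as a `k`-subspace of `H`. -/
def charRing : Submodule k H :=
  LinearMap.ker ((TensorProduct.comm k H H).toLinearMap ∘ₗ Coalgebra.comul (R := k)
      - Coalgebra.comul (R := k))

/-- `d` is the irreducible character (of `H^*`) associated to the simple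
subcoalgebra `C`: the unique cocommutative element of `C` whose counit is the
positive square root of `dim_k C`. -/
def IsCharacterOf (d : H) (C : Submodule k H) : Prop :=
  d ∈ C ∧ IsCocomm k H d ∧
    Coalgebra.counit (R := k) d = ((Nat.sqrt (Module.finrank k ↥C) : ℕ) : k)

/-- The right coset `CK` of a subcoalgebra `C`, i.e. the subspace `C·K`. -/
def CKsub (K : Subalgebra k H) (C : Submodule k H) : Submodule k H :=
  C * K.toSubmodule

/-- The conjugate Hopf subalgebra `ᶜK` of `K` by a simple subcoalgebra `C`
(with associated irreducible character `c`): the span of all simple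
subcoalgebras of `H` whose irreducible character `d` satisfies
`d·c·Λ_K = ε(d)·c·Λ_K`.  (The condition is stated for all cocommutative
elements of `C` resp. `D`; this is equivalent, since the cocommutative
elements of a simple subcoalgebra are exactly the scalar multiples of its
irreducible character.) -/
def conjK (K : Subalgebra k H) (Λ : H) (C : Submodule k H) : Submodule k H :=
  sSup {D : Submodule k H | IsSimpleSubcoalgebra k H D ∧
    ∀ d ∈ D, IsCocomm k H d → ∀ c ∈ C, IsCocomm k H c →
      d * (c * Λ) = Coalgebra.counit (R := k) d • (c * Λ)}

/-- A complete irredundant system of representatives (by simple subcoalgebras)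
of the double cosets `L\H/K`.  (Taking `L = ⊥` gives a system of
representatives of the right cosets `H/K`.) -/
def IsDoubleCosetReps (L K : Subalgebra k H) {ι : Type} (rep : ι → Submodule k H) : Prop :=
  (∀ i, IsSimpleSubcoalgebra k H (rep i)) ∧
  (∀ i j, L.toSubmodule * rep i * K.toSubmodule = L.toSubmodule * rep j * K.toSubmodule
      → i = j) ∧
  (∀ C : Submodule k H, IsSimpleSubcoalgebra k H C →
      ∃ i, C ≤ L.toSubmodule * rep i * K.toSubmodule)

section Ind

variable (K : Subalgebra k H) (M : Type v) [AddCommGroup M] [Module k M]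
  [Module ↥K M] [IsScalarTower k ↥K M]

/-- The relations defining the induced module `H ⊗_K M` as a quotient of
`H ⊗_k M`: the `H`-submodule generated by the elements `a ⊗ m - 1 ⊗ a·m`
for `a ∈ K` (equivalently, spanned by all `h·a ⊗ m - h ⊗ a·m`). -/
def indRel : Submodule H (H ⊗[k] M) :=
  Submodule.span H {z | ∃ (a : ↥K) (m : M),
    z = (a : H) ⊗ₜ[k] m - (1 : H) ⊗ₜ[k] (a • m)}

/-- The induced module `M↑_K^H = H ⊗_K M`, a left `H`-module. -/
abbrev Ind := (H ⊗[k] M) ⧸ indRel k H K M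

variable (C : Submodule k H)

/-- The underlying space `CK ⊗_k M` of which the conjugate module `ᶜM` is a
quotient. -/
def CKM : Type _ := ↥(CKsub k H K C) ⊗[k] M

instance : AddCommGroup (CKM k H K M C) :=
  inferInstanceAs (AddCommGroup (↥(CKsub k H K C) ⊗[k] M))

instance : Module k (CKM k H K M C) :=
  inferInstanceAs (Module k (↥(CKsub k H K C) ⊗[k] M))

/-- The pure tensor `x ⊗ m` as an element of `CK ⊗_k M`. -/
def ckmk (x : ↥(CKsub k H K C)) (m : M) : CKM k H K M C := x ⊗ₜ[k] m

/-- The relations defining the conjugate module `ᶜM = CK ⊗_K M` as a quotient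
of `CK ⊗_k M`: `x·a ⊗ m - x ⊗ a·m` for `a ∈ K`. -/
def conjRel : Submodule k (CKM k H K M C) :=
  Submodule.span k {z | ∃ (x : ↥(CKsub k H K C)) (a : ↥K) (m : M)
    (hxa : (x : H) * (a : H) ∈ CKsub k H K C),
    z = ckmk k H K M C ⟨(x : H) * (a : H), hxa⟩ m - ckmk k H K M C x (a • m)}

/-- The conjugate module `ᶜM := CK ⊗_K M`. -/
abbrev ConjM := CKM k H K M C ⧸ conjRel k H K M C

/-- The canonical copy of the conjugate module `ᶜM = CK ⊗_K M` inside
`H ⊗_K M` (the image of `CK ⊗_K M` under multiplication; this is indeed a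
copy of `ᶜM` since `H` is a free right `K`-module and `CK` is one of the
coset summands). -/
def conjMsub : Submodule k (Ind k H K M) :=
  Submodule.span k {z | ∃ (x : H) (_ : x ∈ CKsub k H K C) (m : M),
    z = Submodule.Quotient.mk (x ⊗ₜ[k] m)}

end Ind

section Comp

variable (L K : Subalgebra k H) (Λ : H) (C : Submodule k H)
variable (M : Type v) [AddCommGroup M] [Module k M] [Module ↥K M] [IsScalarTower k ↥K M]

/-- The underlying space `L ⊗_k (CK ⊗_k M)`. -/
def LCM : Type _ := ↥L ⊗[k] CKM k H K M C

instance : AddCommGroup (LCM k H L K C M) :=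
  inferInstanceAs (AddCommGroup (↥L ⊗[k] CKM k H K M C))

instance : Module k (LCM k H L K C M) :=
  inferInstanceAs (Module k (↥L ⊗[k] CKM k H K M C))

/-- The pure tensor `l ⊗ w` as an element of `L ⊗_k (CK ⊗_k M)`. -/
def lcmk (l : ↥L) (w : CKM k H K M C) : LCM k H L K C M := l ⊗ₜ[k] w

/-- The relations defining `L ⊗_{L ∩ ᶜK} ᶜM` as a quotient of
`L ⊗_k (CK ⊗_k M)`: the balancedness relations over `L ∩ ᶜK` (first set),
together with (the image of) the relations defining `ᶜM = CK ⊗_K M`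
(second set). -/
def compRel : Submodule k (LCM k H L K C M) :=
  Submodule.span k
    ({z | ∃ (l : ↥L) (a : H) (haL : a ∈ L) (_ : a ∈ conjK k H K Λ C)
        (x : ↥(CKsub k H K C)) (m : M) (hax : a * (x : H) ∈ CKsub k H K C),
        z = lcmk k H L K C M ⟨(l : H) * a, mul_mem l.2 haL⟩ (ckmk k H K M C x m)
          - lcmk k H L K C M l (ckmk k H K M C ⟨a * (x : H), hax⟩ m)} ∪
     {z | ∃ (l : ↥L) (x : ↥(CKsub k H K C)) (a : ↥K) (m : M)
        (hxa : (x : H) * (a : H) ∈ CKsub k H K C),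
        z = lcmk k H L K C M l (ckmk k H K M C ⟨(x : H) * (a : H), hxa⟩ m)
          - lcmk k H L K C M l (ckmk k H K M C x (a • m))})

/-- The module `L ⊗_{L ∩ ᶜK} ᶜM` (a left `L`-module via multiplication on the
first tensor factor). -/
abbrev Comp := LCM k H L K C M ⧸ compRel k H L K Λ C M

end Comp

open DirectSum

section Mackey

variable (L K : Subalgebra k H) (Λ : H)

/-- The Mackey isomorphism property for the pair `(L, K)` at the `K`-module
`M`: for any system of double coset representatives, the left-multiplication
map `⊕_C L ⊗_{L ∩ ᶜK} ᶜM → M↑_K^H↓_L^H`, `l ⊗ v ↦ l·v`, is an isomorphism of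
`L`-modules.  (A `k`-linear map satisfying the displayed formula on the
spanning elements is automatically `L`-equivariant for the evident
`L`-actions, so this property is stated for `k`-linear maps.) -/
def MackeyAt (M : Type v) [AddCommGroup M] [Module k M] [Module ↥K M]
    [IsScalarTower k ↥K M] [Module.Finite k M] : Prop :=
  ∀ (ι : Type) [DecidableEq ι] (rep : ι → Submodule k H),
    IsDoubleCosetReps k H L K rep →
    ∃ π : (⨁ i : ι, Comp k H L K Λ (rep i) M) →ₗ[k] Ind k H K M,
      Function.Bijective π ∧
      ∀ (i : ι) (l : ↥L) (x : ↥(CKsub k H K (rep i))) (m : M),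
        π (DirectSum.of (fun i => Comp k H L K Λ (rep i) M) i
            (Submodule.Quotient.mk (lcmk k H L K (rep i) M l (ckmk k H K M (rep i) x m)))) =
          Submodule.Quotient.mk (((l : H) * (x : H)) ⊗ₜ[k] m)

/-- `(L, K)` is a Mackey pair of Hopf subalgebras of `H` (here `Λ` is the
idempotent integral of `K`): for every finite-dimensional `K`-module `M` the
left-multiplication homomorphism `π_M` is an isomorphism. -/
def IsMackeyPair : Prop :=
  ∀ (M : Type v) [AddCommGroup M] [Module k M] [Module ↥K M]
    [IsScalarTower k ↥K M] [Module.Finite k M], MackeyAt k H L K Λ M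

end Mackey


section Statements

/-- The underlying space `(CK ⊗_k M) ⊗_k N`. -/
def CKMN (L K : Subalgebra k H) (C : Submodule k H)
    (M : Type v) [AddCommGroup M] [Module k M]
    (N : Type v) [AddCommGroup N] [Module k N] [Module ↥L N] : Type v :=
  CKM k H K M C ⊗[k] N

instance (L K : Subalgebra k H) (C : Submodule k H)
    (M : Type v) [AddCommGroup M] [Module k M]
    (N : Type v) [AddCommGroup N] [Module k N] [Module ↥L N] :
    AddCommGroup (CKMN k H L K C M N) :=
  inferInstanceAs (AddCommGroup (CKM k H K M C ⊗[k] N))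

instance (L K : Subalgebra k H) (C : Submodule k H)
    (M : Type v) [AddCommGroup M] [Module k M]
    (N : Type v) [AddCommGroup N] [Module k N] [Module ↥L N] :
    Module k (CKMN k H L K C M N) :=
  inferInstanceAs (Module k (CKM k H K M C ⊗[k] N))

/-- The pure tensor `w ⊗ n ∈ (CK ⊗_k M) ⊗_k N`. -/
def ckmnk (L K : Subalgebra k H) (C : Submodule k H)
    (M : Type v) [AddCommGroup M] [Module k M]
    (N : Type v) [AddCommGroup N] [Module k N] [Module ↥L N]
    (w : CKM k H K M C) (n : N) : CKMN k H L K C M N :=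
  w ⊗ₜ[k] n

/-- The relations defining `((ᶜM)↓_{L∩ᶜK} ⊗ N↓_{L∩ᶜK})↑_{L∩ᶜK}^H` as a
quotient of `H ⊗_k ((CK ⊗_k M) ⊗_k N)`: the relations defining
`ᶜM = CK ⊗_K M` (first set), and the balancedness relations over `B = L∩ᶜK`
for the diagonal `B`-action on `ᶜM ⊗ N` through the comultiplication
(second set; `b₁` acts on `ᶜM` by left multiplication, and `b₂ ∈ L` acts on
`N` through the `L`-module structure of `N`). -/
def tpRel (L K : Subalgebra k H) (Λ : H) (C : Submodule k H)
    (M : Type v) [AddCommGroup M] [Module k M] [Module ↥K M] [IsScalarTower k ↥K M]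
    (N : Type v) [AddCommGroup N] [Module k N] [Module ↥L N] [IsScalarTower k ↥L N] :
    Submodule H (H ⊗[k] CKMN k H L K C M N) :=
  Submodule.span H
    ({z | ∃ (x : ↥(CKsub k H K C)) (a : ↥K) (m : M) (n : N)
        (hxa : (x : H) * (a : H) ∈ CKsub k H K C),
        z = (1 : H) ⊗ₜ[k]
              ckmnk k H L K C M N (ckmk k H K M C ⟨(x : H) * (a : H), hxa⟩ m) n
          - (1 : H) ⊗ₜ[k]
              ckmnk k H L K C M N (ckmk k H K M C x (a • m)) n} ∪
     {z | ∃ (b : H) (hbL : b ∈ L) (_ : b ∈ conjK k H K Λ C)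
        (x : ↥(CKsub k H K C)) (m : M) (n : N) (r : ℕ) (b₁ b₂ : Fin r → H)
        (hb₁ : ∀ j, b₁ j * (x : H) ∈ CKsub k H K C) (hb₂ : ∀ j, b₂ j ∈ L),
        Coalgebra.comul (R := k) b = ∑ j, b₁ j ⊗ₜ[k] b₂ j ∧
        z = b ⊗ₜ[k] ckmnk k H L K C M N (ckmk k H K M C x m) n
          - ∑ j, (1 : H) ⊗ₜ[k]
              ckmnk k H L K C M N (ckmk k H K M C ⟨b₁ j * (x : H), hb₁ j⟩ m)
                ((⟨b₂ j, hb₂ j⟩ : ↥L) • n)})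

/-- The `H`-module `((ᶜM)↓_{L∩ᶜK} ⊗ N↓_{L∩ᶜK})↑_{L∩ᶜK}^H`. -/
abbrev TPInd (L K : Subalgebra k H) (Λ : H) (C : Submodule k H)
    (M : Type v) [AddCommGroup M] [Module k M] [Module ↥K M] [IsScalarTower k ↥K M]
    (N : Type v) [AddCommGroup N] [Module k N] [Module ↥L N] [IsScalarTower k ↥L N] :=
  (H ⊗[k] CKMN k H L K C M N) ⧸ tpRel k H L K Λ C M N

end Statements

end

end MackeyPaper

namespace MackeyPaper

noncomputable section

section Contraction

variable {k V W V' W' : Type*} [Field k] [AddCommGroup V] [Module k V] [AddCommGroup W] [Module k W]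
  [AddCommGroup V'] [Module k V'] [AddCommGroup W'] [Module k W']

/-- Contraction of the first tensor factor against a functional. -/
def contractLeft (p : V →ₗ[k] k) : V ⊗[k] W →ₗ[k] W :=
  (TensorProduct.lid k W).toLinearMap ∘ₗ p.rTensor W

/-- Contraction of the second tensor factor against a functional. -/
def contractRight (q : W →ₗ[k] k) : V ⊗[k] W →ₗ[k] V :=
  (TensorProduct.rid k V).toLinearMap ∘ₗ q.lTensor V

@[simp] lemma contractLeft_tmul (p : V →ₗ[k] k) (v : V) (w : W) :
    contractLeft p (v ⊗ₜ[k] w) = p v • w := by simp [contractLeft]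

@[simp] lemma contractRight_tmul (q : W →ₗ[k] k) (v : V) (w : W) :
    contractRight q (v ⊗ₜ[k] w) = q w • v := by simp [contractRight]

lemma contractLeft_map (p : V' →ₗ[k] k) (f : V →ₗ[k] V') (g : W →ₗ[k] W') (t : V ⊗[k] W) :
    contractLeft p (TensorProduct.map f g t) = g (contractLeft (p ∘ₗ f) t) := by
  induction t with
  | zero => simp
  | tmul x y => simp
  | add x y hx hy => simp [hx, hy]

lemma contractRight_map (q : W' →ₗ[k] k) (f : V →ₗ[k] V') (g : W →ₗ[k] W') (t : V ⊗[k] W) :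
    contractRight q (TensorProduct.map f g t) = f (contractRight (q ∘ₗ g) t) := by
  induction t with
  | zero => simp
  | tmul x y => simp
  | add x y hx hy => simp [hx, hy]

lemma contract_comm (p : V →ₗ[k] k) (q : W →ₗ[k] k) (t : V ⊗[k] W) :
    p (contractRight q t) = q (contractLeft p t) := by
  induction t with
  | zero => simp
  | tmul x y => simp [mul_comm]
  | add x y hx hy => simp [hx, hy]

lemma tensor_ext_contractLeft {t t' : V ⊗[k] W}
    (h : ∀ p : V →ₗ[k] k, contractLeft p t = contractLeft p t') : t = t' := by
  classical
  apply (TensorProduct.equivFinsuppOfBasisLeft (N := W) (Module.Basis.ofVectorSpace k V)).injective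
  ext i
  simpa [TensorProduct.equivFinsuppOfBasisLeft_apply, contractLeft] using
    h ((Module.Basis.ofVectorSpace k V).coord i)

lemma tensor_ext_contractRight {t t' : V ⊗[k] W}
    (h : ∀ p : W →ₗ[k] k, contractRight p t = contractRight p t') : t = t' := by
  classical
  apply (TensorProduct.equivFinsuppOfBasisRight (M := V) (Module.Basis.ofVectorSpace k W)).injective
  ext i
  simpa [TensorProduct.equivFinsuppOfBasisRight_apply, contractRight] using
    h ((Module.Basis.ofVectorSpace k W).coord i)

lemma eq_zero_of_forall_dual {v : V} (h : ∀ p : V →ₗ[k] k, p v = 0) : v = 0 :=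
  (Module.forall_dual_apply_eq_zero_iff k v).1 h

lemma exists_dual_of_notMem (P : Submodule k V) {v : V} (hv : v ∉ P) :
    ∃ p : V →ₗ[k] k, p v ≠ 0 ∧ ∀ x ∈ P, p x = 0 := by
  obtain ⟨f, hf, hP⟩ := Submodule.exists_le_ker_of_notMem hv
  exact ⟨f, hf, fun x hx => hP hx⟩

/-- A tensor lies in `P ⊗ Q` as soon as all its contractions lie in `P`, respectively `Q`. -/
lemma mem_range_map_subtype {P : Submodule k V} {Q : Submodule k W} {t : V ⊗[k] W}
    (hP : ∀ q : W →ₗ[k] k, contractRight q t ∈ P) (hQ : ∀ p : V →ₗ[k] k, contractLeft p t ∈ Q) :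
    t ∈ LinearMap.range (TensorProduct.map P.subtype Q.subtype) := by
  obtain ⟨e, he⟩ := P.subtype.exists_leftInverse_of_injective (by simp)
  obtain ⟨f, hf⟩ := Q.subtype.exists_leftInverse_of_injective (by simp)
  have he' (x : V) (hx : x ∈ P) : ((e x : P) : V) = x :=
    congrArg Subtype.val (LinearMap.congr_fun he ⟨x, hx⟩)
  have hf' (x : W) (hx : x ∈ Q) : ((f x : Q) : W) = x :=
    congrArg Subtype.val (LinearMap.congr_fun hf ⟨x, hx⟩)
  have h1 : TensorProduct.map (P.subtype ∘ₗ e) LinearMap.id t = t := by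
    refine tensor_ext_contractRight fun q => ?_
    rw [contractRight_map]
    exact he' _ (hP _)
  have h2 : TensorProduct.map LinearMap.id (Q.subtype ∘ₗ f) t = t := by
    refine tensor_ext_contractLeft fun q => ?_
    rw [contractLeft_map]
    exact hf' _ (hQ _)
  refine ⟨TensorProduct.map e f t, ?_⟩
  rw [← LinearMap.comp_apply, ← TensorProduct.map_comp]
  conv_rhs => rw [← h1, ← h2]
  rw [← LinearMap.comp_apply, ← TensorProduct.map_comp]
  rfl

lemma contractLeft_mem {P : Submodule k V} {Q : Submodule k W} {t : V ⊗[k] W}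
    (ht : t ∈ LinearMap.range (TensorProduct.map P.subtype Q.subtype)) (p : V →ₗ[k] k) :
    contractLeft p t ∈ Q := by
  obtain ⟨s, rfl⟩ := ht
  rw [contractLeft_map]
  exact Subtype.property _

lemma contractRight_mem {P : Submodule k V} {Q : Submodule k W} {t : V ⊗[k] W}
    (ht : t ∈ LinearMap.range (TensorProduct.map P.subtype Q.subtype)) (q : W →ₗ[k] k) :
    contractRight q t ∈ P := by
  obtain ⟨s, rfl⟩ := ht
  rw [contractRight_map]
  exact Subtype.property _

lemma exists_fin_sum_tmul (t : V ⊗[k] W) :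
    ∃ (r : ℕ) (a : Fin r → V) (b : Fin r → W), t = ∑ j, a j ⊗ₜ[k] b j := by
  induction t with
  | zero => exact ⟨0, Fin.elim0, Fin.elim0, by simp⟩
  | tmul x y => exact ⟨1, fun _ => x, fun _ => y, by simp⟩
  | add x y hx hy =>
    obtain ⟨r, a, b, rfl⟩ := hx
    obtain ⟨s, c, d, rfl⟩ := hy
    exact ⟨r + s, Fin.append a c, Fin.append b d, by simp [Fin.sum_univ_add]⟩

lemma exists_fin_sum_tmul_of_mem {P : Submodule k V} {Q : Submodule k W} {t : V ⊗[k] W}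
    (ht : t ∈ LinearMap.range (TensorProduct.map P.subtype Q.subtype)) :
    ∃ (r : ℕ) (a : Fin r → V) (b : Fin r → W),
      (∀ j, a j ∈ P) ∧ (∀ j, b j ∈ Q) ∧ t = ∑ j, a j ⊗ₜ[k] b j := by
  obtain ⟨s, rfl⟩ := ht
  obtain ⟨r, a, b, rfl⟩ := exists_fin_sum_tmul s
  exact ⟨r, fun j => a j, fun j => b j, fun j => (a j).2, fun j => (b j).2, by simp⟩

end Contraction

section Hopf

open Coalgebra HopfAlgebra

variable {k H : Type*} [Field k] [Ring H] [HopfAlgebra k H]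

local notation "Δ" => Coalgebra.comul (R := k) (A := H)
local notation "ε" => Coalgebra.counit (R := k) (A := H)
local notation "𝖲" => HopfAlgebra.antipode k (A := H)

lemma comul_mul' (x y : H) : Δ (x * y) = Δ x * Δ y := Bialgebra.comul_mul x y

section Sums

variable {r : ℕ} {x : H} {a b : Fin r → H}

lemma sum_antipode_mul (h : Δ x = ∑ j, a j ⊗ₜ[k] b j) : ∑ j, 𝖲 (a j) * b j = ε x • 1 := by
  have := mul_antipode_rTensor_comul_apply (R := k) x
  rw [h] at this
  simpa [Algebra.algebraMap_eq_smul_one] using this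

lemma sum_mul_antipode (h : Δ x = ∑ j, a j ⊗ₜ[k] b j) : ∑ j, a j * 𝖲 (b j) = ε x • 1 := by
  have := mul_antipode_lTensor_comul_apply (R := k) x
  rw [h] at this
  simpa [Algebra.algebraMap_eq_smul_one] using this

lemma sum_counit_smul_right (h : Δ x = ∑ j, a j ⊗ₜ[k] b j) : ∑ j, ε (a j) • b j = x := by
  have := congrArg (TensorProduct.lid k H) (rTensor_counit_comul (R := k) x)
  rw [h] at this
  simpa using this

lemma sum_counit_smul_left (h : Δ x = ∑ j, a j ⊗ₜ[k] b j) : ∑ j, ε (b j) • a j = x := by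
  have := congrArg (TensorProduct.rid k H) (lTensor_counit_comul (R := k) x)
  rw [h] at this
  simpa using this

lemma sum_coassoc {Z : Type*} [AddCommGroup Z] [Module k Z] (h : Δ x = ∑ j, a j ⊗ₜ[k] b j)
    (G : H ⊗[k] (H ⊗[k] H) →ₗ[k] Z) :
    ∑ j, G (a j ⊗ₜ Δ (b j)) = ∑ j, G (TensorProduct.assoc k H H H (Δ (a j) ⊗ₜ b j)) := by
  have := congrArg G (coassoc_apply (R := k) x)
  rw [h] at this
  simpa using this.symm

lemma sum_antipode_tmul_mul_comul (h : Δ x = ∑ j, a j ⊗ₜ[k] b j) :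
    ∑ j, (𝖲 (a j) ⊗ₜ[k] (1 : H)) * Δ (b j) = 1 ⊗ₜ x := by
  let G : H ⊗[k] (H ⊗[k] H) →ₗ[k] H ⊗[k] H :=
    LinearMap.mul' k (H ⊗[k] H) ∘ₗ TensorProduct.map
      ((Algebra.TensorProduct.includeLeft (R := k) (S := k) (A := H) (B := H)).toLinearMap ∘ₗ 𝖲)
      LinearMap.id
  have key (t : H ⊗[k] H) (c : H) : G (TensorProduct.assoc k H H H (t ⊗ₜ c)) =
      (LinearMap.mul' k H ((𝖲).rTensor H t)) ⊗ₜ c := by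
    induction t with
    | zero => simp
    | tmul u v => simp [G]
    | add u v hu hv => simp only [add_tmul, map_add, hu, hv]
  calc _ = ∑ j, G (a j ⊗ₜ Δ (b j)) := by simp [G]
    _ = _ := by
      rw [sum_coassoc h]
      simp only [key, mul_antipode_rTensor_comul_apply, Algebra.algebraMap_eq_smul_one,
        smul_tmul, ← tmul_sum]
      rw [sum_counit_smul_right h]

lemma sum_comul_mul_tmul_antipode (h : Δ x = ∑ j, a j ⊗ₜ[k] b j) :
    ∑ j, Δ (a j) * ((1 : H) ⊗ₜ[k] 𝖲 (b j)) = x ⊗ₜ 1 := by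
  let G : H ⊗[k] (H ⊗[k] H) →ₗ[k] H ⊗[k] H :=
    (LinearMap.mul' k (H ⊗[k] H) ∘ₗ TensorProduct.map LinearMap.id
      ((Algebra.TensorProduct.includeRight (R := k) (A := H) (B := H)).toLinearMap ∘ₗ 𝖲))
      ∘ₗ (TensorProduct.assoc k H H H).symm.toLinearMap
  have key (t : H ⊗[k] H) (c : H) : G (c ⊗ₜ t) =
      c ⊗ₜ (LinearMap.mul' k H ((𝖲).lTensor H t)) := by
    induction t with
    | zero => simp
    | tmul u v => simp [G]
    | add u v hu hv => simp only [tmul_add, map_add, hu, hv]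
  calc _ = ∑ j, G (TensorProduct.assoc k H H H (Δ (a j) ⊗ₜ b j)) := by simp [G]
    _ = _ := by
      rw [← sum_coassoc h]
      simp only [key, mul_antipode_lTensor_comul_apply, Algebra.algebraMap_eq_smul_one,
        tmul_smul, smul_tmul', ← sum_tmul]
      rw [sum_counit_smul_left h]

lemma sum_tmul_mul_comul_antipode (h : Δ x = ∑ j, a j ⊗ₜ[k] b j) :
    ∑ j, ((1 : H) ⊗ₜ[k] a j) * Δ (𝖲 (b j)) = 𝖲 x ⊗ₜ 1 := by
  let G : H ⊗[k] (H ⊗[k] H) →ₗ[k] H ⊗[k] H :=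
    LinearMap.mul' k (H ⊗[k] H) ∘ₗ TensorProduct.map
      ((Algebra.TensorProduct.includeLeft (R := k) (S := k) (A := H) (B := H)).toLinearMap ∘ₗ 𝖲)
      (LinearMap.mul' k (H ⊗[k] H) ∘ₗ TensorProduct.map Δ (Δ ∘ₗ 𝖲))
  have key1 (t : H ⊗[k] H) (c : H) : G (c ⊗ₜ t) =
      (𝖲 c ⊗ₜ 1) * Δ (LinearMap.mul' k H ((𝖲).lTensor H t)) := by
    induction t with
    | zero => simp
    | tmul u v => simp [G]
    | add u v hu hv => simp only [tmul_add, map_add, hu, hv, mul_add]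
  have key2 (t : H ⊗[k] H) (c : H) : G (TensorProduct.assoc k H H H (t ⊗ₜ c)) =
      LinearMap.mul' k (H ⊗[k] H) (TensorProduct.map
      ((Algebra.TensorProduct.includeLeft (R := k) (S := k) (A := H) (B := H)).toLinearMap ∘ₗ 𝖲)
       Δ t) * Δ (𝖲 c) := by
    induction t with
    | zero => simp
    | tmul u v => simp [G, mul_assoc]
    | add u v hu hv => simp only [add_tmul, map_add, hu, hv, add_mul]
  have h2 := sum_coassoc h G
  simp only [key1, key2, mul_antipode_lTensor_comul_apply] at h2
  have h3 (y : H) : LinearMap.mul' k (H ⊗[k] H) (TensorProduct.map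
      ((Algebra.TensorProduct.includeLeft (R := k) (S := k) (A := H) (B := H)).toLinearMap ∘ₗ 𝖲)
       Δ (Δ y)) = 1 ⊗ₜ y := by
    obtain ⟨r, c, d, hy⟩ := exists_fin_sum_tmul (Δ y)
    rw [← sum_antipode_tmul_mul_comul hy, hy]
    simp
  simp only [h3] at h2
  rw [← h2]
  conv_rhs => rw [← sum_counit_smul_left h]
  simp [Algebra.algebraMap_eq_smul_one, sum_tmul, smul_tmul', Algebra.TensorProduct.one_def]

end Sums

lemma comul_antipode (x : H) :
    Δ (𝖲 x) = TensorProduct.map 𝖲 𝖲 (TensorProduct.comm k H H (Δ x)) := by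
  obtain ⟨r, a, b, h⟩ := exists_fin_sum_tmul (Δ x)
  let G : H ⊗[k] (H ⊗[k] H) →ₗ[k] H ⊗[k] H :=
    LinearMap.mul' k (H ⊗[k] H) ∘ₗ TensorProduct.map
      ((Algebra.TensorProduct.includeRight (R := k) (A := H) (B := H)).toLinearMap ∘ₗ 𝖲)
      (LinearMap.mul' k (H ⊗[k] H) ∘ₗ TensorProduct.map
        (Algebra.TensorProduct.includeRight (R := k) (A := H) (B := H)).toLinearMap (Δ ∘ₗ 𝖲))
  have key1 (y c : H) : G (c ⊗ₜ Δ y) = 𝖲 y ⊗ₜ 𝖲 c := by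
    obtain ⟨r, u, v, hy⟩ := exists_fin_sum_tmul (Δ y)
    have := sum_tmul_mul_comul_antipode hy
    calc _ = (1 ⊗ₜ 𝖲 c) * ∑ j, ((1 : H) ⊗ₜ[k] u j) * Δ (𝖲 (v j)) := by simp [G, hy]
      _ = _ := by rw [this]; simp
  have key2 (t : H ⊗[k] H) (c : H) : G (TensorProduct.assoc k H H H (t ⊗ₜ c)) =
      (1 ⊗ₜ (LinearMap.mul' k H ((𝖲).rTensor H t))) * Δ (𝖲 c) := by
    induction t with
    | zero => simp
    | tmul u v => simp [G, ← mul_assoc]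
    | add u v hu hv => simp only [add_tmul, map_add, hu, hv, add_mul, tmul_add]
  have h2 := sum_coassoc h G
  simp only [key1, key2, mul_antipode_rTensor_comul_apply] at h2
  rw [h]
  simp only [map_sum, TensorProduct.comm_tmul, TensorProduct.map_tmul, h2]
  conv_lhs => rw [← sum_counit_smul_right h]
  simp [Algebra.algebraMap_eq_smul_one, ← Algebra.TensorProduct.one_def]

lemma comul_antipode_antipode (x : H) :
    Δ (𝖲 (𝖲 x)) = TensorProduct.map (𝖲 ∘ₗ 𝖲) (𝖲 ∘ₗ 𝖲) (Δ x) := by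
  obtain ⟨r, a, b, h⟩ := exists_fin_sum_tmul (Δ x)
  rw [comul_antipode, comul_antipode, h]
  simp

end Hopf

end

end MackeyPaper

namespace MackeyPaper

noncomputable section

section Hit

open Coalgebra HopfAlgebra

variable {k H : Type*} [Field k] [Ring H] [HopfAlgebra k H]

local notation "Δ" => Coalgebra.comul (R := k) (A := H)
local notation "ε" => Coalgebra.counit (R := k) (A := H)
local notation "𝖲" => HopfAlgebra.antipode k (A := H)

lemma contractLeft_mul_left (f : H →ₗ[k] k) (u v : H) (t : H ⊗[k] H) :
    contractLeft f ((u ⊗ₜ v) * t) = v * contractLeft (f ∘ₗ LinearMap.mulLeft k u) t := by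
  induction t with
  | zero => simp
  | tmul x y => simp
  | add x y hx hy => simp only [mul_add, map_add, hx, hy]

lemma contractLeft_mul_right (f : H →ₗ[k] k) (u v : H) (t : H ⊗[k] H) :
    contractLeft f (t * (u ⊗ₜ v)) = contractLeft (f ∘ₗ LinearMap.mulRight k u) t * v := by
  induction t with
  | zero => simp
  | tmul x y => simp
  | add x y hx hy => simp only [add_mul, map_add, hx, hy]

lemma contractRight_mul_left (f : H →ₗ[k] k) (u v : H) (t : H ⊗[k] H) :
    contractRight f ((u ⊗ₜ v) * t) = u * contractRight (f ∘ₗ LinearMap.mulLeft k v) t := by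
  induction t with
  | zero => simp
  | tmul x y => simp
  | add x y hx hy => simp only [mul_add, map_add, hx, hy]

lemma contractRight_mul_right (f : H →ₗ[k] k) (u v : H) (t : H ⊗[k] H) :
    contractRight f (t * (u ⊗ₜ v)) = contractRight (f ∘ₗ LinearMap.mulRight k v) t * u := by
  induction t with
  | zero => simp
  | tmul x y => simp
  | add x y hx hy => simp only [add_mul, map_add, hx, hy]

/-- The contraction `p ↦ (p ⊗ id)(t)` as a linear map on functionals. -/
def contractLeftHom (t : H ⊗[k] H) : (H →ₗ[k] k) →ₗ[k] H where
  toFun p := contractLeft p t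
  map_add' p q := by simp [contractLeft, LinearMap.rTensor_add]
  map_smul' c p := by simp [contractLeft, LinearMap.rTensor_smul]

/-- The contraction `q ↦ (id ⊗ q)(t)` as a linear map on functionals. -/
def contractRightHom (t : H ⊗[k] H) : (H →ₗ[k] k) →ₗ[k] H where
  toFun p := contractRight p t
  map_add' p q := by simp [contractRight, LinearMap.lTensor_add]
  map_smul' c p := by simp [contractRight, LinearMap.lTensor_smul]

/-- The operator `h ↦ ∑ p(h₁) h₂`. -/
def hitL (p : H →ₗ[k] k) : H →ₗ[k] H := contractLeft p ∘ₗ Δ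

/-- The operator `h ↦ ∑ q(h₂) h₁`. -/
def hitR (q : H →ₗ[k] k) : H →ₗ[k] H := contractRight q ∘ₗ Δ

lemma hitL_apply (p : H →ₗ[k] k) (x : H) : hitL p x = contractLeft p (Δ x) := rfl

lemma hitR_apply (p : H →ₗ[k] k) (x : H) : hitR p x = contractRight p (Δ x) := rfl

lemma dual_hitR (p q : H →ₗ[k] k) (x : H) : p (hitR q x) = q (hitL p x) :=
  contract_comm p q _

lemma hitL_counit (x : H) : hitL ε x = x := by
  obtain ⟨r, a, b, h⟩ := exists_fin_sum_tmul (Δ x)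
  simpa [hitL_apply, h] using sum_counit_smul_right h

lemma hitR_counit (x : H) : hitR ε x = x := by
  obtain ⟨r, a, b, h⟩ := exists_fin_sum_tmul (Δ x)
  simpa [hitR_apply, h] using sum_counit_smul_left h

lemma counit_hitL (p : H →ₗ[k] k) (x : H) : ε (hitL p x) = p x := by
  rw [← dual_hitR, hitR_counit]

lemma counit_hitR (p : H →ₗ[k] k) (x : H) : ε (hitR p x) = p x := by
  rw [dual_hitR, hitL_counit]

lemma comul_hitL (p : H →ₗ[k] k) (x : H) :
    Δ (hitL p x) = TensorProduct.map (hitL p) LinearMap.id (Δ x) := by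
  obtain ⟨r, a, b, h⟩ := exists_fin_sum_tmul (Δ x)
  have h2 := sum_coassoc h (contractLeft p)
  have key (t : H ⊗[k] H) (c : H) : contractLeft p (TensorProduct.assoc k H H H (t ⊗ₜ c)) =
      contractLeft p t ⊗ₜ c := by
    induction t with
    | zero => simp
    | tmul u v => simp [smul_tmul']
    | add u v hu hv => simp only [add_tmul, map_add, hu, hv]
  simp only [key, contractLeft_tmul] at h2
  simpa [hitL_apply, h] using h2

lemma comul_hitR (p : H →ₗ[k] k) (x : H) :
    Δ (hitR p x) = TensorProduct.map LinearMap.id (hitR p) (Δ x) := by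
  obtain ⟨r, a, b, h⟩ := exists_fin_sum_tmul (Δ x)
  have h2 := sum_coassoc h
    (contractRight p ∘ₗ (TensorProduct.assoc k H H H).symm.toLinearMap)
  have key (t : H ⊗[k] H) (c : H) :
      contractRight p ((TensorProduct.assoc k H H H).symm (c ⊗ₜ t)) = c ⊗ₜ contractRight p t := by
    induction t with
    | zero => simp
    | tmul u v => simp
    | add u v hu hv => simp only [tmul_add, map_add, hu, hv]
  simp only [LinearMap.comp_apply, LinearEquiv.coe_coe, key, LinearEquiv.symm_apply_apply,
    contractRight_tmul] at h2
  simpa [hitR_apply, h] using h2.symm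

/-- Left-colinear operators are the operators `hitL p`. -/
lemma eq_hitL_of_comul {T : H →ₗ[k] H}
    (hT : ∀ x, Δ (T x) = TensorProduct.map T LinearMap.id (Δ x)) : T = hitL (ε ∘ₗ T) := by
  ext x
  calc T x = hitL ε (T x) := (hitL_counit _).symm
    _ = _ := by
      rw [hitL_apply, hT, contractLeft_map]
      rfl

lemma hitL_comp (p q : H →ₗ[k] k) (x : H) : hitL q (hitL p x) = hitL (q ∘ₗ hitL p) x := by
  rw [hitL_apply, comul_hitL, contractLeft_map]
  rfl

lemma one_tmul_mul_comul {r : ℕ} {x : H} {a b : Fin r → H} (h : Δ x = ∑ j, a j ⊗ₜ[k] b j)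
    (z : H) : (1 ⊗ₜ x) * Δ z = ∑ j, (𝖲 (a j) ⊗ₜ[k] (1 : H)) * Δ (b j * z) := by
  rw [← sum_antipode_tmul_mul_comul h, Finset.sum_mul]
  simp only [comul_mul', mul_assoc]

lemma comul_mul_tmul_one {r : ℕ} {x : H} {a b : Fin r → H} (h : Δ x = ∑ j, a j ⊗ₜ[k] b j)
    (z : H) : Δ z * (x ⊗ₜ 1) = ∑ j, Δ (z * a j) * ((1 : H) ⊗ₜ[k] 𝖲 (b j)) := by
  rw [← sum_comul_mul_tmul_antipode h, Finset.mul_sum]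
  simp only [comul_mul', mul_assoc]

lemma hitL_mem {C : Submodule k H}
    (hC : ∀ c ∈ C, Δ c ∈ LinearMap.range (TensorProduct.map C.subtype C.subtype))
    (p : H →ₗ[k] k) {x : H} (hx : x ∈ C) : hitL p x ∈ C :=
  contractLeft_mem (hC x hx) p

end Hit

section Integral

variable {k : Type} [Field k] {H : Type} [Ring H] [HopfAlgebra k H]

local notation "Δ" => Coalgebra.comul (R := k) (A := H)
local notation "ε" => Coalgebra.counit (R := k) (A := H)
local notation "𝖲" => HopfAlgebra.antipode k (A := H)

section Sub

variable {K : Subalgebra k H} {Λ : H}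

lemma one_tmul_mul_comul_integral (hK : IsHopfSubalgebra k H K)
    (hΛ : IsIdempotentIntegral k H K Λ) {x : H} (hx : x ∈ K) :
    (1 ⊗ₜ x) * Δ Λ = (𝖲 x ⊗ₜ 1) * Δ Λ := by
  obtain ⟨r, a, b, ha, hb, h⟩ := exists_fin_sum_tmul_of_mem (hK.1 x hx)
  rw [one_tmul_mul_comul h]
  conv_rhs => rw [← sum_counit_smul_left h]
  simp only [map_sum, sum_tmul, Finset.sum_mul]
  refine Finset.sum_congr rfl fun j _ => ?_
  rw [(hΛ.2.2 _ (hb j)).1, map_smul, map_smul, ← smul_tmul', smul_mul_assoc, mul_smul_comm]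

lemma comul_integral_mul_tmul_one (hK : IsHopfSubalgebra k H K)
    (hΛ : IsIdempotentIntegral k H K Λ) {x : H} (hx : x ∈ K) :
    Δ Λ * (x ⊗ₜ 1) = Δ Λ * (1 ⊗ₜ 𝖲 x) := by
  obtain ⟨r, a, b, ha, hb, h⟩ := exists_fin_sum_tmul_of_mem (hK.1 x hx)
  rw [comul_mul_tmul_one h]
  conv_rhs => rw [← sum_counit_smul_right h]
  simp only [map_sum, tmul_sum, Finset.mul_sum]
  refine Finset.sum_congr rfl fun j _ => ?_
  rw [(hΛ.2.2 _ (ha j)).2]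
  simp

lemma exists_hitL_integral_eq_one (hK : IsHopfSubalgebra k H K)
    (hΛ : IsIdempotentIntegral k H K Λ) : ∃ f : H →ₗ[k] k, hitL f Λ = 1 := by
  let J : Submodule k H := LinearMap.range (contractLeftHom (Δ Λ))
  have hJ {x : H} (hx : x ∈ K) {y : H} (hy : y ∈ J) : x * y ∈ J := by
    obtain ⟨f, rfl⟩ := hy
    refine ⟨f ∘ₗ LinearMap.mulLeft k (𝖲 x), ?_⟩
    have h1 := congrArg (contractLeft f) (one_tmul_mul_comul_integral hK hΛ hx)
    rw [contractLeft_mul_left, contractLeft_mul_left] at h1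
    simpa [LinearMap.mulLeft_one] using! h1.symm
  have hmem : Δ Λ ∈ LinearMap.range (TensorProduct.map K.toSubmodule.subtype J.subtype) :=
    mem_range_map_subtype (fun q => contractRight_mem (hK.1 _ hΛ.1) q) (fun p => ⟨p, rfl⟩)
  obtain ⟨r, a, b, ha, hb, h⟩ := exists_fin_sum_tmul_of_mem hmem
  have h1 : (1 : H) ∈ J := by
    have h2 := sum_antipode_mul h
    rw [hΛ.2.1, one_smul] at h2
    rw [← h2]
    exact J.sum_mem fun j _ => hJ (hK.2 _ (ha j)) (hb j)
  exact h1

end Sub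

lemma isHopfSubalgebra_top : IsHopfSubalgebra k H ⊤ :=
  ⟨fun _ _ => mem_range_map_subtype (fun _ => trivial) (fun _ => trivial), fun _ _ => trivial⟩

lemma exists_left_integral {R : Type*} [Ring R] [Algebra k R] [IsSemisimpleRing R]
    (e : R →ₐ[k] k) : ∃ z : R, e z = 1 ∧ ∀ x, x * z = e x • z := by
  obtain ⟨J, hJ⟩ := exists_isCompl (RingHom.ker e.toRingHom : Submodule R R)
  obtain ⟨i, hi, j, hj, hij⟩ := Submodule.mem_sup.1
    (show (1 : R) ∈ (RingHom.ker e.toRingHom : Submodule R R) ⊔ J by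
      rw [hJ.sup_eq_top]; trivial)
  have hi' : e i = 0 := hi
  have hej : e j = 1 := by
    have := congrArg e hij
    simpa [hi'] using this
  refine ⟨j, hej, fun x => sub_eq_zero.1 ?_⟩
  have hmem : x * j - e x • j ∈ J := by
    refine J.sub_mem (J.smul_mem x hj) ?_
    rw [Algebra.smul_def]
    exact J.smul_mem _ hj
  have : x * j - e x • j ∈ (RingHom.ker e.toRingHom : Submodule R R) ⊓ J := by
    refine ⟨?_, hmem⟩
    change e (x * j - e x • j) = 0
    simp [hej]
  rwa [hJ.inf_eq_bot] at this

lemma exists_integral [IsSemisimpleRing H] : ∃ Λ : H, IsIdempotentIntegral k H ⊤ Λ := by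
  obtain ⟨z, hz, hl⟩ := exists_left_integral (Bialgebra.counitAlgHom k H)
  obtain ⟨w, hw, hr⟩ := exists_left_integral (R := Hᵐᵒᵖ)
    ((Bialgebra.counitAlgHom k H).fromOpposite fun _ _ => mul_comm _ _)
  have hr' (x : H) : w.unop * x = ε x • w.unop :=
    congrArg MulOpposite.unop (hr (MulOpposite.op x))
  have hw' : ε w.unop = 1 := hw
  have hz' : ε z = 1 := hz
  have hwz : w.unop = z := by
    have h1 := hr' z
    have h2 := hl w.unop
    rw [hz', one_smul] at h1
    rw [Bialgebra.counitAlgHom_apply, hw', one_smul] at h2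
    rw [← h1, h2]
  rw [hwz] at hr'
  exact ⟨z, trivial, hz', fun x _ => ⟨hl x, hr' x⟩⟩

section Full

variable {Λ : H} {l : H →ₗ[k] k}

lemma contractLeft_antipode_mul (hΛ : IsIdempotentIntegral k H ⊤ Λ) (hl : hitL l Λ = 1) (y : H) :
    contractLeft (l ∘ₗ LinearMap.mulLeft k (𝖲 y)) (Δ Λ) = y := by
  have h1 := congrArg (contractLeft l)
    (one_tmul_mul_comul_integral isHopfSubalgebra_top hΛ (x := y) trivial)
  rw [contractLeft_mul_left, contractLeft_mul_left] at h1
  rw [hitL_apply] at hl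
  simpa [LinearMap.mulLeft_one, hl] using h1.symm

lemma contractLeft_mul_eq_antipode (hΛ : IsIdempotentIntegral k H ⊤ Λ) (hl : hitL l Λ = 1)
    (y : H) : contractLeft (l ∘ₗ LinearMap.mulRight k y) (Δ Λ) = 𝖲 y := by
  have h1 := congrArg (contractLeft l)
    (comul_integral_mul_tmul_one isHopfSubalgebra_top hΛ (x := y) trivial)
  rw [contractLeft_mul_right, contractLeft_mul_right] at h1
  rw [hitL_apply] at hl
  simpa [LinearMap.mulRight_one, hl] using h1

lemma antipode_injective (hΛ : IsIdempotentIntegral k H ⊤ Λ) (hl : hitL l Λ = 1) :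
    Function.Injective 𝖲 := by
  intro x y hxy
  rw [← contractLeft_antipode_mul hΛ hl x, ← contractLeft_antipode_mul hΛ hl y, hxy]

lemma contractRightHom_injective (hΛ : IsIdempotentIntegral k H ⊤ Λ) (hl : hitL l Λ = 1) :
    Function.Injective (contractRightHom (Δ Λ)) := by
  refine (injective_iff_map_eq_zero _).2 fun f hf => ?_
  ext y
  have h1 := contract_comm (l ∘ₗ LinearMap.mulLeft k (𝖲 y)) f (Δ Λ)
  rw [contractLeft_antipode_mul hΛ hl] at h1
  rw [← h1, show contractRight f (Δ Λ) = 0 from hf]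
  simp

lemma functional_integral (hl : hitL l Λ = 1) : l Λ = 1 := by
  rw [← counit_hitL, hl, Bialgebra.counit_one]

variable [FiniteDimensional k H]

lemma contractLeftHom_injective (hΛ : IsIdempotentIntegral k H ⊤ Λ) (hl : hitL l Λ = 1) :
    Function.Injective (contractLeftHom (Δ Λ)) := by
  refine (LinearMap.injective_iff_surjective_of_finrank_eq_finrank
    (Subspace.dual_finrank_eq (K := k) (V := H))).2 fun y => ?_
  exact ⟨_, contractLeft_antipode_mul hΛ hl y⟩

lemma hitL_left_inj (hΛ : IsIdempotentIntegral k H ⊤ Λ) (hl : hitL l Λ = 1)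
    {p q : H →ₗ[k] k} (h : hitL p Λ = hitL q Λ) : p = q :=
  contractLeftHom_injective hΛ hl h

lemma antipode_bijective (hΛ : IsIdempotentIntegral k H ⊤ Λ) (hl : hitL l Λ = 1) :
    Function.Bijective 𝖲 :=
  ⟨antipode_injective hΛ hl, LinearMap.injective_iff_surjective.1 (antipode_injective hΛ hl)⟩

lemma functional_mul_comm (hΛ : IsIdempotentIntegral k H ⊤ Λ) (hl : hitL l Λ = 1) (x y : H) :
    l (x * y) = l (𝖲 (𝖲 y) * x) := by
  have := contractLeftHom_injective hΛ hl
    (show contractLeftHom (Δ Λ) (l ∘ₗ LinearMap.mulRight k y) =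
      contractLeftHom (Δ Λ) (l ∘ₗ LinearMap.mulLeft k (𝖲 (𝖲 y))) from
      (contractLeft_mul_eq_antipode hΛ hl y).trans (contractLeft_antipode_mul hΛ hl (𝖲 y)).symm)
  exact LinearMap.congr_fun this x

lemma eq_zero_of_functional_mul (hΛ : IsIdempotentIntegral k H ⊤ Λ) (hl : hitL l Λ = 1) {w : H}
    (h : ∀ z, l (w * z) = 0) : w = 0 := by
  obtain ⟨y, rfl⟩ := (antipode_bijective hΛ hl).2 w
  have h1 := contractLeft_antipode_mul hΛ hl y
  rw [show l ∘ₗ LinearMap.mulLeft k (𝖲 y) = 0 from LinearMap.ext h] at h1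
  have : y = 0 := by rw [← h1]; simp [contractLeft]
  simp [this]

lemma eq_smul_of_hitL (hΛ : IsIdempotentIntegral k H ⊤ Λ) (hl : hitL l Λ = 1)
    {p : H →ₗ[k] k} {c : k} (h : hitL p Λ = c • 1) : p = c • l := by
  refine contractLeftHom_injective hΛ hl ?_
  rw [map_smul]
  change hitL p Λ = c • hitL l Λ
  rw [h, hl]

lemma hitL_functional (hΛ : IsIdempotentIntegral k H ⊤ Λ) (hl : hitL l Λ = 1) (h : H) :
    hitL l h = l h • 1 := by
  refine sub_eq_zero.1 (eq_zero_of_forall_dual (k := k) fun q => ?_)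
  have : q ∘ₗ hitL l = q 1 • l := by
    refine eq_smul_of_hitL hΛ hl ?_
    rw [← hitL_comp, hl, hitL_apply, Bialgebra.comul_one]
    simp [Algebra.TensorProduct.one_def]
  have h1 := LinearMap.congr_fun this h
  simp only [LinearMap.comp_apply, LinearMap.smul_apply] at h1
  simp [h1, mul_comm]

lemma hitR_functional (hΛ : IsIdempotentIntegral k H ⊤ Λ) (hl : hitL l Λ = 1) (h : H) :
    hitR l h = l h • hitR l Λ := by
  refine sub_eq_zero.1 (eq_zero_of_forall_dual (k := k) fun q => ?_)
  have : l ∘ₗ hitL q = q (hitR l Λ) • l := by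
    refine eq_smul_of_hitL hΛ hl ?_
    rw [← hitL_comp, hitL_functional hΛ hl, dual_hitR]
  have h1 := LinearMap.congr_fun this h
  simp only [LinearMap.comp_apply, LinearMap.smul_apply] at h1
  rw [map_sub, dual_hitR, h1]
  simp [mul_comm]

lemma isGroupLikeElem_hitR (hΛ : IsIdempotentIntegral k H ⊤ Λ) (hl : hitL l Λ = 1) :
    IsGroupLikeElem k (hitR l Λ) where
  counit_eq_one := by rw [counit_hitR, functional_integral hl]
  comul_eq_tmul_self := by
    rw [comul_hitR]
    conv_rhs => rw [hitR_apply]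
    have (t : H ⊗[k] H) : TensorProduct.map LinearMap.id (hitR l) t =
        contractRight l t ⊗ₜ hitR l Λ := by
      induction t with
      | zero => simp
      | tmul u v => simp [hitR_functional hΛ hl v, smul_tmul']
      | add u v hu hv => simp only [add_tmul, map_add, hu, hv]
    rw [this]
    rfl

lemma antipode_four_mul (hΛ : IsIdempotentIntegral k H ⊤ Λ) (hl : hitL l Λ = 1) (x : H) :
    𝖲 (𝖲 (𝖲 (𝖲 x))) * hitR l Λ = hitR l Λ * x := by
  set a := hitR l Λ with ha
  have hg := isGroupLikeElem_hitR hΛ hl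
  rw [← ha] at hg
  have hSa : 𝖲 a * a = 1 := by
    have := sum_antipode_mul (k := k) (r := 1) (x := a) (a := fun _ => a) (b := fun _ => a)
      (by simpa using hg.comul_eq_tmul_self)
    simpa [hg.counit_eq_one] using this
  have haS : a * 𝖲 a = 1 := by
    have := sum_mul_antipode (k := k) (r := 1) (x := a) (a := fun _ => a) (b := fun _ => a)
      (by simpa using hg.comul_eq_tmul_self)
    simpa [hg.counit_eq_one] using this
  have hSSa : 𝖲 (𝖲 a) = a := by
    have h1 : 𝖲 (𝖲 a) * 𝖲 a = 1 := by
      rw [← HopfAlgebra.antipode_mul_antidistrib, haS, HopfAlgebra.antipode_one]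
    calc 𝖲 (𝖲 a) = 𝖲 (𝖲 a) * (𝖲 a * a) := by rw [hSa, mul_one]
      _ = a := by rw [← mul_assoc, h1, one_mul]
  let m : H →ₗ[k] k := l ∘ₗ LinearMap.mulRight k a
  have hm : contractRight m (Δ Λ) = 1 := by
    have h1 : hitR l (Λ * a) = a := by
      rw [hitR_functional hΛ hl, (hΛ.2.2 a trivial).2, hg.counit_eq_one, one_smul,
        functional_integral hl, one_smul]
    rw [hitR_apply, comul_mul', hg.comul_eq_tmul_self, contractRight_mul_right] at h1
    calc _ = contractRight m (Δ Λ) * (a * 𝖲 a) := by rw [haS, mul_one]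
      _ = 1 := by rw [← mul_assoc, h1, haS]
  have hmx (x z : H) : m (x * z) = m (z * 𝖲 (𝖲 x)) := by
    have e1 : contractRight (m ∘ₗ LinearMap.mulLeft k x) (Δ Λ) = 𝖲 x := by
      have h1 := congrArg (contractRight m)
        (one_tmul_mul_comul_integral isHopfSubalgebra_top hΛ (x := x) trivial)
      rw [contractRight_mul_left, contractRight_mul_left] at h1
      simpa [LinearMap.mulLeft_one, hm] using h1
    have e2 : contractRight (m ∘ₗ LinearMap.mulRight k (𝖲 (𝖲 x))) (Δ Λ) = 𝖲 x := by
      have h1 := congrArg (contractRight m)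
        (comul_integral_mul_tmul_one isHopfSubalgebra_top hΛ (x := 𝖲 x) trivial)
      rw [contractRight_mul_right, contractRight_mul_right] at h1
      simpa [LinearMap.mulRight_one, hm] using h1.symm
    have := contractRightHom_injective hΛ hl
      (show contractRightHom (Δ Λ) (m ∘ₗ LinearMap.mulLeft k x) =
        contractRightHom (Δ Λ) (m ∘ₗ LinearMap.mulRight k (𝖲 (𝖲 x))) from e1.trans e2.symm)
    exact LinearMap.congr_fun this z
  refine (sub_eq_zero.1 (eq_zero_of_functional_mul hΛ hl fun z => ?_)).symm
  rw [sub_mul, map_sub, sub_eq_zero]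
  have h1 := hmx x z
  simp only [m, LinearMap.comp_apply, LinearMap.mulRight_apply] at h1
  rw [functional_mul_comm hΛ hl, hSSa, mul_assoc z, functional_mul_comm hΛ hl z,
    HopfAlgebra.antipode_mul_antidistrib, HopfAlgebra.antipode_mul_antidistrib, hSSa,
    ← mul_assoc] at h1
  exact h1

lemma finite_groupLike : Finite (GroupLike k H) :=
  (linearIndep_groupLikeVal (R := k) (A := H)).finite

/-- The square of the antipode has finite order. -/
lemma exists_antipode_iterate_eq_id (hΛ : IsIdempotentIntegral k H ⊤ Λ) (hl : hitL l Λ = 1) :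
    ∃ n : ℕ, 0 < n ∧ ∀ x : H, ((𝖲 ∘ₗ 𝖲) ^ n) x = x := by
  have := finite_groupLike (k := k) (H := H)
  set a := hitR l Λ with ha
  obtain ⟨n, hn, h1⟩ := (isOfFinOrder_of_finite
    (⟨a, isGroupLikeElem_hitR hΛ hl⟩ : GroupLike k H)).exists_pow_eq_one
  have han : a ^ n = 1 := by simpa using congrArg GroupLike.val h1
  refine ⟨2 * n, by omega, fun x => ?_⟩
  have key (j : ℕ) (x : H) : ((𝖲 ∘ₗ 𝖲) ^ (2 * j)) x * a ^ j = a ^ j * x := by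
    induction j with
    | zero => simp
    | succ j ih =>
      have h4 := antipode_four_mul hΛ hl (((𝖲 ∘ₗ 𝖲) ^ (2 * j)) x)
      rw [← ha] at h4
      have e : ((𝖲 ∘ₗ 𝖲) ^ (2 * (j + 1))) x = 𝖲 (𝖲 (𝖲 (𝖲 (((𝖲 ∘ₗ 𝖲) ^ (2 * j)) x)))) := by
        rw [show 2 * (j + 1) = 1 + (1 + 2 * j) by ring, pow_add, pow_add, pow_one]
        rfl
      rw [e, pow_succ', ← mul_assoc, h4, mul_assoc, ih, ← mul_assoc]
  simpa [han] using key n x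

end Full

end Integral

end

end MackeyPaper

namespace MackeyPaper

noncomputable section

section RootsOfUnity

variable {k : Type*} [Field k] [CharZero k] [IsAlgClosed k]

/-- The trace of an operator of finite order and the trace of its inverse, as sums of roots of
unity. -/
lemma exists_trace_eq_sum_roots {V : Type*} [AddCommGroup V] [Module k V] [FiniteDimensional k V]
    {f g : Module.End k V} {n : ℕ} (hn : 0 < n) (hf : f ^ n = 1) (hfg : g * f = 1) :
    ∃ (s : Finset k) (d : k → ℕ), (∀ μ ∈ s, μ ^ n = 1) ∧
      LinearMap.trace k V f = ∑ μ ∈ s, d μ * μ ∧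
      LinearMap.trace k V g = ∑ μ ∈ s, d μ * μ⁻¹ := by
  classical
  have hss : f.IsSemisimple := by
    refine Module.End.isSemisimple_of_squarefree_aeval_eq_zero
      (p := (Polynomial.X ^ n - Polynomial.C 1 : Polynomial k)) ?_ (by simp [hf])
    exact (Polynomial.separable_X_pow_sub_C (1 : k) (by exact_mod_cast hn.ne')
      one_ne_zero).squarefree
  have hinternal : DirectSum.IsInternal f.eigenspace :=
    DirectSum.isInternal_submodule_of_iSupIndep_of_iSup_eq_top
      f.eigenspaces_iSupIndep hss.iSup_eigenspace_eq_top
  have hfin : {μ : k | f.eigenspace μ ≠ ⊥}.Finite :=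
    WellFoundedGT.finite_ne_bot_of_iSupIndep f.eigenspaces_iSupIndep
  have hroot (μ : k) (hμ : f.eigenspace μ ≠ ⊥) : μ ^ n = 1 := by
    obtain ⟨v, hv, hv0⟩ := Submodule.exists_mem_ne_zero_of_ne_bot hμ
    have h1 : (f ^ n) v = μ ^ n • v := Module.End.HasEigenvector.pow_apply ⟨hv, hv0⟩ n
    rw [hf] at h1
    have h2 : (μ ^ n - 1) • v = 0 := by
      rw [sub_smul, ← h1]
      simp
    simpa [hv0, sub_eq_zero] using h2
  have hfμ (μ : k) (v : V) (hv : v ∈ f.eigenspace μ) : f v = μ • v :=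
    Module.End.mem_eigenspace_iff.1 hv
  have hgμ (μ : k) (v : V) (hv : v ∈ f.eigenspace μ) : g v = μ⁻¹ • v := by
    by_cases hbot : f.eigenspace μ = ⊥
    · rw [hbot, Submodule.mem_bot] at hv
      simp [hv]
    have hμ0 : μ ≠ 0 := by
      intro h0
      have := hroot μ hbot
      simp [h0, hn.ne'] at this
    have h1 : g (f v) = v := LinearMap.congr_fun hfg v
    rw [hfμ μ v hv, map_smul] at h1
    rw [← h1, smul_smul, inv_mul_cancel₀ hμ0, one_smul, h1]
  have htr (φ : Module.End k V) (c : k → k) (h : ∀ μ v, v ∈ f.eigenspace μ → φ v = c μ • v) :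
      LinearMap.trace k V φ =
        ∑ μ ∈ hfin.toFinset, (Module.finrank k (f.eigenspace μ) : k) * c μ := by
    have hmaps (μ : k) : Set.MapsTo φ (f.eigenspace μ) (f.eigenspace μ) := fun v hv => by
      rw [h μ v hv]
      exact Submodule.smul_mem _ _ hv
    rw [LinearMap.trace_eq_sum_trace_restrict' hinternal hfin hmaps]
    refine Finset.sum_congr rfl fun μ _ => ?_
    have : φ.restrict (hmaps μ) = c μ • LinearMap.id := by
      ext v
      exact h μ v v.2
    rw [this]
    simp [mul_comm]
  exact ⟨hfin.toFinset, fun μ => Module.finrank k (f.eigenspace μ),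
    fun μ hμ => hroot μ (by simpa using hμ), htr f id hfμ, htr g _ hgμ⟩

/-- An embedding of the field of algebraic numbers. -/
def algebraicNumberEmbedding (F : Type*) [Field F] [CharZero F] [IsAlgClosed F] :
    AlgebraicClosure ℚ →+* F :=
  letI : Algebra ℚ (AlgebraicClosure ℚ) := AlgebraicClosure.instAlgebra ℚ
  haveI : Algebra.IsAlgebraic ℚ (AlgebraicClosure ℚ) := AlgebraicClosure.isAlgebraic ℚ
  (IsAlgClosed.lift : AlgebraicClosure ℚ →ₐ[ℚ] F).toRingHom

/-- The elements of `k` coming from algebraic numbers which are nonnegative reals under a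
fixed embedding into `ℂ`. -/
def IsNonnegAlgebraic (t : k) : Prop :=
  ∃ e : AlgebraicClosure ℚ, algebraicNumberEmbedding k e = t ∧
    ∃ r : ℝ, 0 ≤ r ∧ algebraicNumberEmbedding ℂ e = r

lemma IsNonnegAlgebraic.eq_zero_of_sum_eq_zero {ι : Type*} [Fintype ι] {t : ι → k}
    (ht : ∀ i, IsNonnegAlgebraic (t i)) (h : ∑ i, t i = 0) (i : ι) : t i = 0 := by
  choose e he r hr hre using ht
  have h1 : ∑ i, e i = 0 := by
    apply (algebraicNumberEmbedding k).injective
    simpa [he] using h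
  have h2 := congrArg (algebraicNumberEmbedding ℂ) h1
  simp only [map_sum, hre, map_zero] at h2
  have h3 : ∑ i, r i = 0 := by exact_mod_cast h2
  have h4 := (Finset.sum_eq_zero_iff_of_nonneg fun i _ => hr i).1 h3 i (Finset.mem_univ i)
  have h5 : e i = 0 := by
    apply (algebraicNumberEmbedding ℂ).injective
    simpa [hre] using h4
  rw [← he, h5, map_zero]

lemma exists_lift_root_of_unity {n : ℕ} (hn : 0 < n) {μ : k} (hμ : μ ^ n = 1) :
    ∃ ν : AlgebraicClosure ℚ, ν ^ n = 1 ∧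
      algebraicNumberEmbedding k ν = μ := by
  have : NeZero n := ⟨hn.ne'⟩
  obtain ⟨ζ, hζ⟩ := HasEnoughRootsOfUnity.exists_primitiveRoot (AlgebraicClosure ℚ) n
  have hζ' := hζ.map_of_injective
    (f := algebraicNumberEmbedding k) (RingHom.injective _)
  obtain ⟨i, -, hi⟩ := hζ'.eq_pow_of_pow_eq_one hμ
  exact ⟨ζ ^ i, by rw [← pow_mul, mul_comm, pow_mul, hζ.pow_eq_one, one_pow], by simpa using hi⟩

lemma isNonnegAlgebraic_sum_mul_sum_inv {n : ℕ} (hn : 0 < n) (s : Finset k) (d : k → ℕ)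
    (hs : ∀ μ ∈ s, μ ^ n = 1) :
    IsNonnegAlgebraic ((∑ μ ∈ s, d μ * μ⁻¹) * ∑ μ ∈ s, (d μ : k) * μ) := by
  choose! ν hν hνμ using fun μ (hμ : μ ∈ s) => exists_lift_root_of_unity hn (hs μ hμ)
  let τ := algebraicNumberEmbedding ℂ
  refine ⟨(∑ μ ∈ s, d μ * (ν μ)⁻¹) * ∑ μ ∈ s, d μ * ν μ, ?_,
    Complex.normSq (∑ μ ∈ s, d μ * τ (ν μ)), Complex.normSq_nonneg _, ?_⟩
  · simp only [map_mul, map_sum, map_natCast, map_inv₀]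
    congr 1 <;> exact Finset.sum_congr rfl fun μ hμ => by rw [hνμ μ hμ]
  · rw [Complex.normSq_eq_conj_mul_self]
    simp only [map_mul, map_sum, map_natCast, map_inv₀]
    congr 1
    refine Finset.sum_congr rfl fun μ hμ => ?_
    have h1 : (τ (ν μ)) ^ n = 1 := by rw [← map_pow, hν μ hμ, map_one]
    rw [← Complex.inv_eq_conj (Complex.norm_eq_one_of_pow_eq_one h1 hn.ne')]

lemma isNonnegAlgebraic_trace_mul_trace {m : Type*} [Fintype m] [DecidableEq m] {n : ℕ}
    (hn : 0 < n) {u v : Matrix m m k} (huv : v * u = 1) {c : k} (hu : u ^ n = Matrix.scalar m c) :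
    IsNonnegAlgebraic (v.trace * u.trace) := by
  rcases isEmpty_or_nonempty m with hm | hm
  · exact ⟨0, by simp [Matrix.trace], 0, le_rfl, by simp⟩
  have hc : c ≠ 0 := by
    rintro rfl
    have h1 : v ^ n * u ^ n = 1 := by
      rw [← (show Commute v u by
        rw [Commute, SemiconjBy, huv, mul_eq_one_comm.1 huv]).mul_pow, huv, one_pow]
    rw [hu, map_zero, mul_zero] at h1
    exact zero_ne_one h1
  obtain ⟨s, hs⟩ := IsAlgClosed.exists_pow_nat_eq c hn
  have hs0 : s ≠ 0 := by
    rintro rfl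
    rw [zero_pow hn.ne'] at hs
    exact hc hs.symm
  obtain ⟨S, d, hS, h1, h2⟩ := exists_trace_eq_sum_roots (k := k)
    (f := Matrix.toLin' (s⁻¹ • u)) (g := Matrix.toLin' (s • v)) hn
    (by
      rw [← Matrix.toLin'_pow, smul_pow, hu, inv_pow, hs]
      rw [show c⁻¹ • Matrix.scalar m c = 1 by
        rw [Matrix.scalar_apply, ← Matrix.diagonal_smul, ← Matrix.diagonal_one]
        congr 1
        ext
        simp [hc]]
      exact Matrix.toLin'_one)
    (by
      rw [Module.End.mul_eq_comp, ← Matrix.toLin'_mul, smul_mul_smul_comm, mul_inv_cancel₀ hs0, huv,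
        one_smul]
      exact Matrix.toLin'_one)
  rw [Matrix.trace_toLin'_eq, Matrix.trace_smul] at h1 h2
  convert isNonnegAlgebraic_sum_mul_sum_inv hn S d hS using 1
  rw [← h1, ← h2]
  simp only [smul_eq_mul]
  field_simp

end RootsOfUnity

section Blocks

variable {k : Type*} [Field k] {ι : Type*} [DecidableEq ι] {d : ι → Type*}
  [∀ i, Fintype (d i)] [∀ i, DecidableEq (d i)]

/-- The matrix representing a functional on a block of a product of matrix algebras. -/
def blockDensity (l : (∀ i, Matrix (d i) (d i) k) →ₗ[k] k) (i : ι) : Matrix (d i) (d i) k :=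
  Matrix.of fun a b => l (Pi.single i (Matrix.single b a 1))

lemma apply_single_eq_trace (l : (∀ i, Matrix (d i) (d i) k) →ₗ[k] k) (i : ι)
    (X : Matrix (d i) (d i) k) : l (Pi.single i X) = (X * blockDensity l i).trace := by
  have h1 : l (Pi.single i X) = ∑ a, ∑ b, X a b * l (Pi.single i (Matrix.single a b 1)) := by
    conv_lhs => rw [Matrix.matrix_eq_sum_single X]
    change (l ∘ₗ LinearMap.single k (fun i => Matrix (d i) (d i) k) i) _ = _
    simp only [map_sum]
    refine Finset.sum_congr rfl fun a _ => Finset.sum_congr rfl fun b _ => ?_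
    have h3 := map_smul (l ∘ₗ LinearMap.single k (fun i => Matrix (d i) (d i) k) i) (X a b)
      (Matrix.single a b 1)
    simp only [LinearMap.comp_apply, LinearMap.single_apply, Matrix.smul_single, smul_eq_mul,
      mul_one] at h3
    exact h3
  rw [h1]
  simp [Matrix.trace, Matrix.mul_apply, blockDensity]

variable [Fintype ι]

lemma trace_blocks {θ : Module.End k (∀ i, Matrix (d i) (d i) k)} {u v : ∀ i, Matrix (d i) (d i) k}
    (h : ∀ y i, θ y i = v i * y i * u i) :
    LinearMap.trace k _ θ = ∑ i, (v i).trace * (u i).trace := by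
  rw [LinearMap.trace_eq_matrix_trace k (Pi.basis fun i => Matrix.stdBasis k (d i) (d i)),
    Matrix.trace, Fintype.sum_sigma]
  refine Finset.sum_congr rfl fun i _ => ?_
  rw [Matrix.trace, Matrix.trace, Finset.sum_mul_sum, ← Finset.univ_product_univ,
    Finset.sum_product]
  refine Finset.sum_congr rfl fun a _ => Finset.sum_congr rfl fun b _ => ?_
  have h1 (z : ∀ i, Matrix (d i) (d i) k) : (Pi.basis fun i => Matrix.stdBasis k (d i) (d i)).repr z
      ⟨i, (a, b)⟩ = z i a b := by
    rw [Pi.basis_repr]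
    simp [Matrix.stdBasis]
  rw [Matrix.diag_apply, LinearMap.toMatrix_apply, h1, h]
  simp [Matrix.mul_apply, Matrix.stdBasis_eq_single, Matrix.single_apply, ite_and]

variable [CharZero k] [IsAlgClosed k]

lemma trace_ne_zero_of_blocks {θ : Module.End k (∀ i, Matrix (d i) (d i) k)}
    {l : (∀ i, Matrix (d i) (d i) k) →ₗ[k] k} (hl : ∀ x y, l (x * y) = l (θ y * x))
    (hnd : ∀ w, (∀ z, l (w * z) = 0) → w = 0) {n : ℕ} (hn : 0 < n) (hθ : ∀ x, (θ ^ n) x = x)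
    {e : (∀ i, Matrix (d i) (d i) k) → k} {Λ : ∀ i, Matrix (d i) (d i) k} (hΛ0 : Λ ≠ 0)
    (hΛl : ∀ x, x * Λ = e x • Λ) (hΛr : ∀ x, Λ * x = e x • Λ) :
    LinearMap.trace k _ θ ≠ 0 := by
  set u := blockDensity l with hu
  have h1 (y : ∀ i, Matrix (d i) (d i) k) (i : ι) : y i * u i = u i * θ y i := by
    refine Matrix.ext_iff_trace_mul_left.2 fun X => ?_
    have h2 := hl (Pi.single i X) y
    rw [← Pi.single_mul_left, ← Pi.single_mul_right, apply_single_eq_trace,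
      apply_single_eq_trace, ← hu] at h2
    rw [← mul_assoc, h2, mul_assoc, Matrix.trace_mul_comm, mul_assoc]
  have hunit (i : ι) : (u i).det ≠ 0 := by
    intro h0
    obtain ⟨v, hv, huv⟩ := Matrix.exists_mulVec_eq_zero_iff.2 h0
    have hW : u i * Matrix.vecMulVec v v = 0 := by
      rw [Matrix.mul_vecMulVec, huv, Matrix.zero_vecMulVec]
    have h2 := hnd (Pi.single i (Matrix.vecMulVec v v)) fun z => by
      rw [← Pi.single_mul_left, apply_single_eq_trace, ← hu, Matrix.trace_mul_comm, ← mul_assoc,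
        hW, zero_mul, Matrix.trace_zero]
    rw [Pi.single_eq_zero_iff] at h2
    obtain ⟨a, ha⟩ := Function.ne_iff.1 hv
    have := congrFun (congrFun h2 a) a
    simp only [Matrix.vecMulVec_apply, Matrix.zero_apply, mul_self_eq_zero] at this
    exact ha this
  have hinv (i : ι) : (u i)⁻¹ * u i = 1 := Matrix.nonsing_inv_mul _ (hunit i).isUnit
  have hθu (y : ∀ i, Matrix (d i) (d i) k) (i : ι) : θ y i = (u i)⁻¹ * y i * u i := by
    rw [mul_assoc, h1, ← mul_assoc, hinv, one_mul]
  have hscalar (i : ι) (X : Matrix (d i) (d i) k) (hX : ∀ Y, Y * X = X * Y) :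
      ∃ c, X = Matrix.scalar (d i) c := by
    obtain ⟨c, hc⟩ := Matrix.mem_range_scalar_of_commute_single
      (M := X) fun a b _ => hX (Matrix.single a b 1)
    exact ⟨c, hc.symm⟩
  have hpow (i : ι) : ∃ c, u i ^ n = Matrix.scalar (d i) c := by
    refine hscalar i _ fun Y => ?_
    have key (j : ℕ) (y : ∀ i, Matrix (d i) (d i) k) :
        y i * u i ^ j = u i ^ j * ((θ ^ j) y) i := by
      induction j generalizing y with
      | zero => simp
      | succ j ih =>
        rw [pow_succ', ← mul_assoc, h1, mul_assoc, ih, ← mul_assoc, pow_succ θ]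
        rfl
    have h3 := key n (Pi.single i Y)
    rwa [hθ, Pi.single_eq_same] at h3
  rw [trace_blocks hθu]
  intro h0
  have hterm := IsNonnegAlgebraic.eq_zero_of_sum_eq_zero
    (fun i => isNonnegAlgebraic_trace_mul_trace hn (hinv i) (hpow i).choose_spec) h0
  obtain ⟨i, hi⟩ := Function.ne_iff.1 hΛ0
  have hYc (Y : Matrix (d i) (d i) k) : Y * Λ i = e (Pi.single i Y) • Λ i := by
    have := congrFun (hΛl (Pi.single i Y)) i
    simpa using this
  have hcY (Y : Matrix (d i) (d i) k) : Λ i * Y = e (Pi.single i Y) • Λ i := by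
    have := congrFun (hΛr (Pi.single i Y)) i
    simpa using this
  obtain ⟨c, hc⟩ := hscalar i (Λ i) fun Y => by rw [hYc, hcY]
  have hc0 : c ≠ 0 := by
    rintro rfl
    exact hi (by simpa using hc)
  have hY (Y : Matrix (d i) (d i) k) : Y = e (Pi.single i Y) • 1 := by
    have h3 := hYc Y
    have h4 : Λ i = c • 1 := by rw [hc, Matrix.scalar_apply, Matrix.smul_one_eq_diagonal]
    rw [h4, Matrix.mul_smul, mul_one, smul_comm] at h3
    exact smul_right_injective _ hc0 h3
  have hne : Nonempty (d i) := by
    by_contra hemp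
    rw [not_nonempty_iff] at hemp
    exact hi (Subsingleton.elim _ _)
  have h5 := hterm i
  have h6 := hinv i
  obtain ⟨q, hq⟩ : ∃ q : k, (u i)⁻¹ = q • 1 := ⟨_, hY _⟩
  obtain ⟨p, hp⟩ : ∃ p : k, u i = p • 1 := ⟨_, hY _⟩
  rw [hq, hp] at h5 h6
  have h7 : q * p = 1 := by
    have := congrFun (congrFun h6 hne.some) hne.some
    simpa [mul_comm] using this
  simp only [Matrix.trace_smul, Matrix.trace_one, smul_eq_mul] at h5
  have h8 : (q * p) * ((Fintype.card (d i) : k) * Fintype.card (d i)) = 0 := by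
    rw [← h5]; ring
  rw [h7, one_mul, mul_self_eq_zero, Nat.cast_eq_zero] at h8
  exact Fintype.card_ne_zero h8

end Blocks

section Hopf

variable {k : Type} [Field k] {H : Type} [Ring H] [HopfAlgebra k H] [FiniteDimensional k H]
  {Λ : H} {l : H →ₗ[k] k}

local notation "Δ" => Coalgebra.comul (R := k) (A := H)
local notation "ε" => Coalgebra.counit (R := k) (A := H)
local notation "𝖲" => HopfAlgebra.antipode k (A := H)

lemma antipode_integral (hΛ : IsIdempotentIntegral k H ⊤ Λ) (hl : hitL l Λ = 1) : 𝖲 Λ = Λ := by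
  have h1 : Λ * 𝖲 Λ = Λ := by
    rw [(hΛ.2.2 _ trivial).2, HopfAlgebra.counit_antipode, hΛ.2.1, one_smul]
  obtain ⟨y, hy⟩ := (antipode_bijective hΛ hl).2 Λ
  have hεy : ε y = 1 := by rw [← HopfAlgebra.counit_antipode (R := k) y, hy, hΛ.2.1]
  have h2 : Λ * 𝖲 Λ = 𝖲 Λ := by
    conv_lhs => rw [← hy]
    rw [← HopfAlgebra.antipode_mul_antidistrib, hy, (hΛ.2.2 y trivial).2, hεy, one_smul]
  rw [← h2, h1]

/-- The trace of the composition of the square of the antipode with a left-colinear operator. -/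
lemma trace_antipode_sq_comp_hitL (hΛ : IsIdempotentIntegral k H ⊤ Λ) (hl : hitL l Λ = 1)
    (f : H →ₗ[k] k) : LinearMap.trace k H ((𝖲 ∘ₗ 𝖲) ∘ₗ hitL f) = l 1 * f Λ := by
  obtain ⟨r, a, b, h⟩ := exists_fin_sum_tmul (Δ Λ)
  have h1 : (𝖲 ∘ₗ 𝖲) ∘ₗ hitL f =
      ∑ j, ((l ∘ₗ LinearMap.mulLeft k (a j)) ∘ₗ hitL f).smulRight (𝖲 (b j)) := by
    ext x
    have h2 := contractLeft_mul_eq_antipode hΛ hl (hitL f x)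
    rw [h] at h2
    simp only [map_sum, contractLeft_tmul] at h2
    simp [← h2, LinearMap.sum_apply]
  rw [h1, map_sum]
  simp only [LinearMap.trace_smulRight]
  have h3 := congrArg (contractLeft f) (sum_tmul_mul_comul_antipode h)
  simp only [map_sum, contractLeft_mul_left, LinearMap.mulLeft_one, LinearMap.comp_id,
    contractLeft_tmul, antipode_integral hΛ hl] at h3
  have h4 := congrArg l h3
  simp only [map_sum, map_smul, smul_eq_mul] at h4
  rw [mul_comm, ← h4]
  rfl

variable [CharZero k] [IsAlgClosed k] [IsSemisimpleRing H]

/-- The integral of the dual of a semisimple Hopf algebra in characteristic zero does not vanish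
at `1`. -/
lemma functional_one_ne_zero (hΛ : IsIdempotentIntegral k H ⊤ Λ) (hl : hitL l Λ = 1) :
    l 1 ≠ 0 := by
  have h1 := trace_antipode_sq_comp_hitL hΛ hl ε
  rw [show hitL ε = LinearMap.id from LinearMap.ext hitL_counit, LinearMap.comp_id, hΛ.2.1,
    mul_one] at h1
  rw [← h1]
  obtain ⟨n, d, -, ⟨e⟩⟩ := IsSemisimpleRing.exists_algEquiv_pi_matrix_of_isAlgClosed k H
  obtain ⟨N, hN, hSN⟩ := exists_antipode_iterate_eq_id hΛ hl
  rw [← LinearMap.trace_conj' _ e.toLinearEquiv]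
  refine trace_ne_zero_of_blocks (l := l ∘ₗ e.symm.toLinearMap) (n := N)
    (e := fun x => ε (e.symm x)) (Λ := e Λ) ?_ ?_ hN ?_ ?_ ?_ ?_
  · intro x y
    simpa [LinearEquiv.conj_apply] using functional_mul_comm hΛ hl (e.symm x) (e.symm y)
  · intro w hw
    have := eq_zero_of_functional_mul hΛ hl (w := e.symm w) fun z => by simpa using hw (e z)
    simpa using this
  · intro x
    have h2 := map_pow (LinearEquiv.conjRingEquiv e.toLinearEquiv) (𝖲 ∘ₗ 𝖲) N
    change (LinearEquiv.conjRingEquiv e.toLinearEquiv (𝖲 ∘ₗ 𝖲) ^ N) x = x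
    rw [← h2]
    change e (((𝖲 ∘ₗ 𝖲) ^ N) (e.symm x)) = x
    rw [hSN, AlgEquiv.apply_symm_apply]
  · intro h0
    have : Λ = 0 := by simpa using h0
    have h2 := hΛ.2.1
    simp [this] at h2
  · intro x
    have := congrArg e (hΛ.2.2 (e.symm x) trivial).1
    simpa using this
  · intro x
    have := congrArg e (hΛ.2.2 (e.symm x) trivial).2
    simpa using this

end Hopf

end

end MackeyPaper

namespace MackeyPaper

noncomputable section

/-- If conjugation by `s` preserves a subalgebra of `End V`, then `s T` is nilpotent for every `T`
in the Jacobson radical of that subalgebra. -/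
lemma isNilpotent_mul_of_mem_jacobson {k V : Type*} [Field k] [AddCommGroup V] [Module k V]
    [FiniteDimensional k V] (A : Subalgebra k (Module.End k V)) {s s' : Module.End k V}
    (h₁ : s * s' = 1) (h₂ : s' * s = 1) (hA : ∀ T ∈ A, s * T * s' ∈ A) {T : A}
    (hT : T ∈ Ring.jacobson A) : IsNilpotent (s * (T : Module.End k V)) := by
  have : IsArtinianRing A := IsArtinianRing.of_finite k A
  let σ : A →ₐ[k] A :=
    { toFun := fun T => ⟨s * T * s', hA T T.2⟩
      map_one' := by ext1; simp [h₁]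
      map_mul' := fun T U => by
        ext1
        simp only [MulMemClass.coe_mul]
        rw [show s * (T : Module.End k V) * s' * (s * U * s') = s * T * (s' * s) * U * s' by
          simp only [mul_assoc], h₂, mul_one]
        simp only [mul_assoc]
      map_zero' := by ext1; simp
      map_add' := fun T U => by ext1; simp [mul_add, add_mul]
      commutes' := fun c => by ext1; simp [Algebra.algebraMap_eq_smul_one, h₁] }
  have hσi : Function.Injective σ.toLinearMap := by
    intro T U h
    have h3 : s * (T : Module.End k V) * s' = s * U * s' := congrArg Subtype.val h
    have h4 := congrArg (fun X => s' * X * s) h3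
    simp only [mul_assoc, h₂, mul_one] at h4
    simp only [← mul_assoc, h₂, one_mul] at h4
    exact Subtype.ext h4
  have hσs : Function.Surjective σ.toRingHom := LinearMap.injective_iff_surjective.1 hσi
  have hJ (U : A) (hU : U ∈ Ring.jacobson A) : σ U ∈ Ring.jacobson A := by
    have : RingHomSurjective σ.toRingHom := ⟨hσs⟩
    exact Ring.le_comap_jacobson σ.toRingHom hU
  have hpow (n : ℕ) : ∃ U ∈ Ring.jacobson A, s ^ n * (T : Module.End k V) = U * s ^ n := by
    induction n with
    | zero => exact ⟨T, hT, by simp⟩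
    | succ n ih =>
      obtain ⟨U, hU, h⟩ := ih
      refine ⟨σ U, hJ U hU, ?_⟩
      change _ = s * U * s' * _
      rw [pow_succ', mul_assoc, h, mul_assoc (s * (U : Module.End k V)), ← mul_assoc s' s, h₂,
        one_mul, mul_assoc]
  have hprod (n : ℕ) : ∃ U ∈ Ring.jacobson A ^ n,
      (s * (T : Module.End k V)) ^ n = U * s ^ n := by
    induction n with
    | zero => exact ⟨1, by rw [Submodule.pow_zero, Ideal.one_eq_top]; trivial, by simp⟩
    | succ n ih =>
      obtain ⟨U, hU, h⟩ := ih
      obtain ⟨W, hW, h'⟩ := hpow (n + 1)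
      refine ⟨U * W, ?_, ?_⟩
      · rw [Submodule.pow_succ]
        exact Ideal.mul_mem_mul hU hW
      · rw [pow_succ, h, mul_assoc, ← mul_assoc (s ^ n), ← pow_succ, h', MulMemClass.coe_mul,
          mul_assoc]
  obtain ⟨n, hn⟩ := IsArtinianRing.isNilpotent_jacobson_bot (R := A)
  obtain ⟨U, hU, h⟩ := hprod n
  have hn' : Ring.jacobson A ^ n = ⊥ := by rw [← Ideal.jacobson_bot]; exact hn
  rw [hn', Ideal.mem_bot] at hU
  exact ⟨n, by rw [h, hU]; simp⟩

section Colinear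

variable {k : Type} [Field k] {H : Type} [Ring H] [HopfAlgebra k H]

local notation "Δ" => Coalgebra.comul (R := k) (A := H)
local notation "ε" => Coalgebra.counit (R := k) (A := H)
local notation "𝖲" => HopfAlgebra.antipode k (A := H)

/-- The algebra of endomorphisms of `H` which commute with the coaction on the right tensor factor
and with right multiplication by `K`. -/
def colinearEnd (K : Subalgebra k H) : Subalgebra k (Module.End k H) where
  carrier := {T | (∀ x, Δ (T x) = TensorProduct.map T LinearMap.id (Δ x)) ∧
    ∀ x, ∀ a ∈ K, T (x * a) = T x * a}
  mul_mem' := by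
    rintro T U ⟨hT, hT'⟩ ⟨hU, hU'⟩
    refine ⟨fun x => ?_, fun x a ha => ?_⟩
    · rw [Module.End.mul_apply, hT, hU, ← LinearMap.comp_apply, ← TensorProduct.map_comp]
      rfl
    · simp only [Module.End.mul_apply, hU' x a ha, hT' _ a ha]
  add_mem' := by
    rintro T U ⟨hT, hT'⟩ ⟨hU, hU'⟩
    refine ⟨fun x => ?_, fun x a ha => ?_⟩
    · simp [hT, hU, TensorProduct.map_add_left]
    · simp [hU' x a ha, hT' x a ha, add_mul]
  algebraMap_mem' c := by
    refine ⟨fun x => ?_, fun x a _ => ?_⟩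
    · rw [Algebra.algebraMap_eq_smul_one, TensorProduct.map_smul_left]
      simp only [LinearMap.smul_apply, Module.End.one_apply, map_smul]
      rw [show (1 : Module.End k H) = LinearMap.id from rfl, TensorProduct.map_id]
      rfl
    · simp [Algebra.algebraMap_eq_smul_one]

variable {K : Subalgebra k H} {κ : H}

lemma hitL_mulRight_mem_colinearEnd (hK : IsHopfSubalgebra k H K)
    (hκ : IsIdempotentIntegral k H K κ) (g : H →ₗ[k] k) :
    hitL (g ∘ₗ LinearMap.mulRight k κ) ∈ colinearEnd K := by
  refine ⟨comul_hitL _, fun x a ha => ?_⟩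
  obtain ⟨r, b, c, hb, hc, h⟩ := exists_fin_sum_tmul_of_mem (hK.1 a ha)
  rw [hitL_apply, comul_mul', h, Finset.mul_sum, map_sum]
  simp only [contractLeft_mul_right]
  have (j : Fin r) : (g ∘ₗ LinearMap.mulRight k κ) ∘ₗ LinearMap.mulRight k (b j) =
      ε (b j) • (g ∘ₗ LinearMap.mulRight k κ) := by
    ext x
    simp [mul_assoc, (hκ.2.2 (b j) (hb j)).1]
  simp only [this]
  have h2 (j : Fin r) : contractLeft (ε (b j) • (g ∘ₗ LinearMap.mulRight k κ)) (Δ x) =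
      ε (b j) • hitL (g ∘ₗ LinearMap.mulRight k κ) x :=
    map_smul (contractLeftHom (Δ x)) _ _
  simp only [h2]
  conv_rhs => rw [← sum_counit_smul_right h, Finset.mul_sum]
  simp

lemma eq_hitL_of_mem_colinearEnd {T : Module.End k H} (hT : T ∈ colinearEnd K) :
    T = hitL (ε ∘ₗ T) :=
  eq_hitL_of_comul hT.1

lemma counit_mul_integral (hκ : IsIdempotentIntegral k H K κ) {T : Module.End k H}
    (hT : T ∈ colinearEnd K) (x : H) : ε (T (x * κ)) = ε (T x) := by
  rw [hT.2 x κ hκ.1, Bialgebra.counit_mul, hκ.2.1, mul_one]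

lemma antipode_sq_pow_mul (n : ℕ) (x y : H) :
    ((𝖲 ∘ₗ 𝖲) ^ n) (x * y) = ((𝖲 ∘ₗ 𝖲) ^ n) x * ((𝖲 ∘ₗ 𝖲) ^ n) y := by
  induction n with
  | zero => simp
  | succ n ih =>
    simp only [pow_succ', Module.End.mul_apply, ih]
    simp [HopfAlgebra.antipode_mul_antidistrib]

lemma antipode_sq_pow_mem (hK : IsHopfSubalgebra k H K) (n : ℕ) {x : H} (hx : x ∈ K) :
    ((𝖲 ∘ₗ 𝖲) ^ n) x ∈ K := by
  induction n with
  | zero => simpa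
  | succ n ih =>
    rw [pow_succ', Module.End.mul_apply]
    exact hK.2 _ (hK.2 _ ih)

lemma comul_antipode_sq_pow (n : ℕ) (x : H) : Δ (((𝖲 ∘ₗ 𝖲) ^ n) x) =
    TensorProduct.map ((𝖲 ∘ₗ 𝖲) ^ n) ((𝖲 ∘ₗ 𝖲) ^ n) (Δ x) := by
  induction n with
  | zero =>
    rw [pow_zero, show (1 : Module.End k H) = LinearMap.id from rfl, TensorProduct.map_id]
    rfl
  | succ n ih =>
    rw [pow_succ', Module.End.mul_eq_comp, TensorProduct.map_comp, LinearMap.comp_apply (map _ _),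
      ← ih]
    exact comul_antipode_antipode _

lemma antipode_sq_conj_mem (hK : IsHopfSubalgebra k H K) {n : ℕ}
    (hn : ∀ x : H, ((𝖲 ∘ₗ 𝖲) ^ (n + 1)) x = x) {T : Module.End k H} (hT : T ∈ colinearEnd K) :
    (𝖲 ∘ₗ 𝖲) * T * (𝖲 ∘ₗ 𝖲) ^ n ∈ colinearEnd K := by
  set s : Module.End k H := 𝖲 ∘ₗ 𝖲 with hs
  have hsn : s * s ^ n = 1 := by
    rw [← pow_succ']
    exact LinearMap.ext hn
  refine ⟨fun x => ?_, fun x a ha => ?_⟩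
  · simp only [Module.End.mul_apply]
    rw [show Δ (s (T ((s ^ n) x))) = TensorProduct.map s s (Δ (T ((s ^ n) x))) from
      comul_antipode_antipode _, hT.1, comul_antipode_sq_pow]
    rw [← LinearMap.comp_apply (map T _), ← TensorProduct.map_comp,
      ← LinearMap.comp_apply (map s s), ← TensorProduct.map_comp, LinearMap.id_comp, ← hs,
      ← Module.End.mul_eq_comp s (s ^ n), hsn]
    rfl
  · simp only [Module.End.mul_apply]
    rw [antipode_sq_pow_mul, hT.2 _ _ (antipode_sq_pow_mem hK n ha)]
    have h1 (y z : H) : s (y * z) = s y * s z := by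
      simp [hs, HopfAlgebra.antipode_mul_antidistrib]
    rw [h1, ← Module.End.mul_apply s (s ^ n), ← hs, hsn, Module.End.one_apply]

variable [FiniteDimensional k H] [CharZero k] [IsAlgClosed k] [IsSemisimpleRing H]

lemma isSemisimpleRing_colinearEnd (hK : IsHopfSubalgebra k H K)
    (hκ : IsIdempotentIntegral k H K κ) : IsSemisimpleRing (colinearEnd K) := by
  have : IsArtinianRing (colinearEnd K) := IsArtinianRing.of_finite k (colinearEnd K)
  rw [IsArtinianRing.isSemisimpleRing_iff_jacobson, eq_bot_iff]
  intro T hT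
  obtain ⟨Λ, hΛ⟩ := exists_integral (k := k) (H := H)
  obtain ⟨l, hl⟩ := exists_hitL_integral_eq_one isHopfSubalgebra_top hΛ
  obtain ⟨N, hN, hSN⟩ := exists_antipode_iterate_eq_id hΛ hl
  obtain ⟨n, rfl⟩ : ∃ n, N = n + 1 := ⟨N - 1, by omega⟩
  have hSN' : ((𝖲 ∘ₗ 𝖲) ^ (n + 1) : Module.End k H) = 1 := LinearMap.ext hSN
  have htr (U : colinearEnd K) (hU : U ∈ Ring.jacobson (colinearEnd K)) :
      ε ((U : Module.End k H) Λ) = 0 := by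
    have h1 := isNilpotent_mul_of_mem_jacobson (colinearEnd K) (s := 𝖲 ∘ₗ 𝖲)
      (s' := (𝖲 ∘ₗ 𝖲) ^ n) (by rw [← pow_succ', hSN']) (by rw [← pow_succ, hSN'])
      (fun T hT => antipode_sq_conj_mem hK hSN hT) hU
    have h2 := (LinearMap.isNilpotent_trace_of_isNilpotent h1).eq_zero
    rw [Module.End.mul_eq_comp, eq_hitL_of_mem_colinearEnd U.2,
      trace_antipode_sq_comp_hitL hΛ hl] at h2
    exact (mul_eq_zero.1 h2).resolve_left (functional_one_ne_zero hΛ hl)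
  have hTΛ : (T : Module.End k H) Λ = 0 := by
    refine eq_zero_of_forall_dual (k := k) fun g => ?_
    have h1 := htr (⟨_, hitL_mulRight_mem_colinearEnd hK hκ g⟩ * T) (Ideal.mul_mem_left _ _ hT)
    rw [MulMemClass.coe_mul, Module.End.mul_apply, counit_hitL, LinearMap.comp_apply,
      LinearMap.mulRight_apply, ← T.2.2 _ _ hκ.1, (hΛ.2.2 κ trivial).2, hκ.2.1, one_smul] at h1
    exact h1
  rw [eq_hitL_of_mem_colinearEnd T.2] at hTΛ
  have h0 : ε ∘ₗ (T : Module.End k H) = 0 := by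
    refine hitL_left_inj hΛ hl ?_
    rw [hTΛ]
    simp [hitL, contractLeft]
  rw [Ideal.mem_bot]
  ext1
  rw [eq_hitL_of_mem_colinearEnd T.2, h0]
  ext x
  simp [hitL, contractLeft]

end Colinear

end

end MackeyPaper

namespace MackeyPaper

noncomputable section

/-- A left ideal of a semisimple ring is generated by an idempotent. -/
lemma exists_idempotent_generator {R : Type*} [Ring R] [IsSemisimpleRing R] (I : Ideal R) :
    ∃ e ∈ I, ∀ x ∈ I, x * e = x := by
  obtain ⟨J, hJ⟩ := exists_isCompl I
  obtain ⟨i, hi, j, hj, hij⟩ := Submodule.mem_sup.1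
    (show (1 : R) ∈ I ⊔ J by rw [hJ.sup_eq_top]; trivial)
  refine ⟨i, hi, fun x hx => ?_⟩
  have h1 : x * j = x - x * i := by rw [eq_sub_iff_add_eq', ← mul_add, hij, mul_one]
  have h2 : x * j ∈ I ⊓ J :=
    ⟨h1 ▸ I.sub_mem hx (I.mul_mem_left x hi), J.smul_mem x hj⟩
  rw [hJ.inf_eq_bot, Submodule.mem_bot, h1, sub_eq_zero] at h2
  exact h2.symm

lemma eq_zero_of_isIdempotentElem {k V : Type*} [Field k] [CharZero k] [AddCommGroup V] [Module k V]
    [FiniteDimensional k V] {E : Module.End k V} (hE : IsIdempotentElem E)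
    (htr : LinearMap.trace k V E = 0) : E = 0 :=
  LinearMap.IsIdempotentElem.eq_zero_of_trace_eq_zero hE htr

section Coset

variable {k : Type} [Field k] {H : Type} [Ring H] [HopfAlgebra k H]

local notation "Δ" => Coalgebra.comul (R := k) (A := H)
local notation "ε" => Coalgebra.counit (R := k) (A := H)
local notation "𝖲" => HopfAlgebra.antipode k (A := H)

lemma IsSubcoalgebra.mul {C D : Submodule k H} (hC : IsSubcoalgebra k H C)
    (hD : IsSubcoalgebra k H D) : IsSubcoalgebra k H (C * D) := by
  intro z hz
  induction hz using Submodule.mul_induction_on' with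
  | mem_mul_mem x hx y hy =>
    obtain ⟨r, a, b, ha, hb, h⟩ := exists_fin_sum_tmul_of_mem (hC x hx)
    obtain ⟨r', a', b', ha', hb', h'⟩ := exists_fin_sum_tmul_of_mem (hD y hy)
    rw [comul_mul', h, h', Finset.sum_mul_sum]
    refine Submodule.sum_mem _ fun i _ => Submodule.sum_mem _ fun j _ => ?_
    exact ⟨⟨_, Submodule.mul_mem_mul (ha i) (ha' j)⟩ ⊗ₜ ⟨_, Submodule.mul_mem_mul (hb i) (hb' j)⟩,
      by simp⟩
  | add x _ y _ hx hy => rw [map_add]; exact Submodule.add_mem _ hx hy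

lemma isSubcoalgebra_sSup {s : Set (Submodule k H)} (hs : ∀ D ∈ s, IsSubcoalgebra k H D) :
    IsSubcoalgebra k H (sSup s) := by
  have : sSup s ≤ (LinearMap.range (TensorProduct.map (sSup s).subtype (sSup s).subtype)).comap
      Δ := by
    refine sSup_le fun D hD x hx => ?_
    exact mem_range_map_subtype (fun q => le_sSup hD (contractRight_mem (hs D hD x hx) q))
      (fun q => le_sSup hD (contractLeft_mem (hs D hD x hx) q))
  exact this

lemma IsSubcoalgebra.inf {C D : Submodule k H} (hC : IsSubcoalgebra k H C)
    (hD : IsSubcoalgebra k H D) : IsSubcoalgebra k H (C ⊓ D) := fun x hx =>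
  mem_range_map_subtype
    (fun q => ⟨contractRight_mem (hC x hx.1) q, contractRight_mem (hD x hx.2) q⟩)
    (fun q => ⟨contractLeft_mem (hC x hx.1) q, contractLeft_mem (hD x hx.2) q⟩)

lemma hitL_hitR_comm (p q : H →ₗ[k] k) (x : H) : hitL p (hitR q x) = hitR q (hitL p x) := by
  rw [hitL_apply, comul_hitR, contractLeft_map]
  rfl

/-- The restriction of `hitL p` to a subcoalgebra. -/
def hitLRestrict {D : Submodule k H} (hD : IsSubcoalgebra k H D) (p : H →ₗ[k] k) :
    Module.End k D :=
  (hitL p).restrict fun _ hx => hitL_mem hD p hx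

lemma hitLRestrict_apply {D : Submodule k H} (hD : IsSubcoalgebra k H D) (p : H →ₗ[k] k) (x : D) :
    (hitLRestrict hD p x : H) = hitL p x := rfl

lemma isSubcoalgebra_conjK (K : Subalgebra k H) (κ : H) (C : Submodule k H) :
    IsSubcoalgebra k H (conjK k H K κ C) :=
  isSubcoalgebra_sSup fun _ hD => hD.1.1

lemma sum_hitL_mul_hitL {f : H →ₗ[k] k} {r : ℕ} {p q : Fin r → (H →ₗ[k] k)}
    (hf : ∀ x y, f (x * y) = ∑ j, p j x * q j y) (x y : H) :
    ∑ j, hitL (p j) x * hitL (q j) y = hitL f (x * y) := by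
  obtain ⟨m, a, b, h⟩ := exists_fin_sum_tmul (Δ x)
  obtain ⟨m', a', b', h'⟩ := exists_fin_sum_tmul (Δ y)
  simp only [hitL_apply, comul_mul', h, h', Finset.sum_mul_sum, map_sum,
    Algebra.TensorProduct.tmul_mul_tmul, contractLeft_tmul, hf, Finset.sum_smul,
    smul_mul_smul_comm]
  rw [Finset.sum_comm]
  refine Finset.sum_congr rfl fun i _ => ?_
  rw [Finset.sum_comm]

variable [FiniteDimensional k H]

/-- The character of a subcoalgebra, viewed as a right comodule. -/
lemma exists_character {D : Submodule k H} (hD : IsSubcoalgebra k H D) :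
    ∃ d ∈ D, IsCocomm k H d ∧
      ∀ p : H →ₗ[k] k, p d = LinearMap.trace k D (hitLRestrict hD p) := by
  let τ : (H →ₗ[k] k) →ₗ[k] k :=
    { toFun := fun p => LinearMap.trace k D (hitLRestrict hD p)
      map_add' := fun p q => by
        rw [← map_add]
        congr 1
        ext x
        exact map_add (contractLeftHom (Δ x)) p q
      map_smul' := fun c p => by
        rw [← map_smul]
        congr 1
        ext x
        exact map_smul (contractLeftHom (Δ x)) c p }
  obtain ⟨d, hd⟩ := (Module.evalEquiv k H).surjective τ
  have hd' (p : H →ₗ[k] k) : p d = LinearMap.trace k D (hitLRestrict hD p) :=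
    congrArg (fun t => t p) hd
  refine ⟨d, ?_, ?_, hd'⟩
  · by_contra hdD
    obtain ⟨p, hp, hp'⟩ := exists_dual_of_notMem D hdD
    refine hp ((hd' p).trans ?_)
    rw [show hitLRestrict hD p = 0 from ?_, map_zero]
    ext x
    rw [hitLRestrict_apply]
    obtain ⟨r, a, b, ha, hb, h⟩ := exists_fin_sum_tmul_of_mem (hD x x.2)
    simp [hitL_apply, h, hp' _ (ha _)]
  · refine tensor_ext_contractLeft fun p => sub_eq_zero.1 (eq_zero_of_forall_dual (k := k)
      fun q => ?_)
    have h1 (p q : H →ₗ[k] k) : q (hitL p d) =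
        LinearMap.trace k D (hitLRestrict hD q * hitLRestrict hD p) := by
      rw [← LinearMap.comp_apply, hd']
      congr 1
      ext x
      exact (hitL_comp p q x).symm
    have h2 (t : H ⊗[k] H) : contractLeft p (TensorProduct.comm k H H t) = contractRight p t := by
      induction t with
      | zero => simp
      | tmul x y => simp
      | add x y hx hy => simp only [map_add, hx, hy]
    rw [map_sub, h2, sub_eq_zero]
    change q (hitR p d) = q (hitL p d)
    rw [dual_hitR, h1, h1, LinearMap.trace_mul_comm]

lemma exists_sum_mul_eq (f : H →ₗ[k] k) : ∃ (r : ℕ) (p q : Fin r → (H →ₗ[k] k)),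
    ∀ x y, f (x * y) = ∑ j, p j x * q j y := by
  obtain ⟨t, ht⟩ := (TensorProduct.dualDistribEquiv k H H).surjective (f ∘ₗ LinearMap.mul' k H)
  obtain ⟨r, p, q, rfl⟩ := exists_fin_sum_tmul t
  refine ⟨r, p, q, fun x y => ?_⟩
  have h1 := congrArg (fun F => F (x ⊗ₜ y)) ht
  simp only [map_sum, LinearMap.sum_apply] at h1
  exact h1.symm

/-- An idempotent functional which vanishes on the product of the characters of two
subcoalgebras vanishes on their product. -/
lemma idempotent_vanish {f : H →ₗ[k] k} (hf : ∀ x, f (hitL f x) = f x) [CharZero k]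
    {C D : Submodule k H} (hC : IsSubcoalgebra k H C) (hD : IsSubcoalgebra k H D) {c d : H}
    (hc : ∀ p : H →ₗ[k] k, p c = LinearMap.trace k C (hitLRestrict hC p))
    (hd : ∀ p : H →ₗ[k] k, p d = LinearMap.trace k D (hitLRestrict hD p))
    (h0 : f (d * c) = 0) {x y : H} (hx : x ∈ D) (hy : y ∈ C) : hitL f (x * y) = 0 := by
  obtain ⟨r, p, q, hpq⟩ := exists_sum_mul_eq f
  let E : Module.End k (D ⊗[k] C) :=
    ∑ j, TensorProduct.map (hitLRestrict hD (p j)) (hitLRestrict hC (q j))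
  have htr : LinearMap.trace k _ E = 0 := by
    simp only [E, map_sum, LinearMap.trace_tensorProduct', ← hc, ← hd, ← hpq, h0]
  have hEtmul (x : D) (y : C) :
      TensorProduct.map D.subtype C.subtype (E (x ⊗ₜ y)) =
        ∑ j, hitL (p j) (x : H) ⊗ₜ[k] hitL (q j) (y : H) := by
    simp only [E, LinearMap.sum_apply, map_sum, TensorProduct.map_tmul]
    rfl
  have hcontr (x y : H) (u v : H →ₗ[k] k) :
      ∑ j, u (hitL (p j) x) * v (hitL (q j) y) = f (hitR u x * hitR v y) := by
    simp only [hpq, dual_hitR]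
  have hidem : IsIdempotentElem E := by
    refine TensorProduct.ext' fun x y => ?_
    apply TensorProduct.map_injective_of_flat_flat (R := k) D.subtype C.subtype
      (Submodule.subtype_injective _) (Submodule.subtype_injective _)
    have h1 : E (x ⊗ₜ y) = ∑ j, hitLRestrict hD (p j) x ⊗ₜ[k] hitLRestrict hC (q j) y := by
      simp only [E, LinearMap.sum_apply, TensorProduct.map_tmul]
    rw [Module.End.mul_apply, hEtmul, h1, map_sum, map_sum]
    simp only [hEtmul]
    refine tensor_ext_contractLeft fun u => sub_eq_zero.1 (eq_zero_of_forall_dual (k := k)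
      fun v => ?_)
    simp only [map_sub, map_sum, contractLeft_tmul, map_smul, smul_eq_mul, hcontr,
      hitLRestrict_apply, ← hitL_hitR_comm]
    rw [← map_sum, sum_hitL_mul_hitL hpq, hf, sub_self]
  have hE : E = 0 := eq_zero_of_isIdempotentElem (k := k) (V := D ⊗[k] C) (E := E) hidem htr
  have h2 := congrArg (LinearMap.mul' k H) (hEtmul ⟨x, hx⟩ ⟨y, hy⟩)
  simp only [map_sum, LinearMap.mul'_apply, sum_hitL_mul_hitL hpq] at h2
  rw [← h2, hE]
  simp

variable [CharZero k] [IsAlgClosed k] [IsSemisimpleRing H]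

variable {K : Subalgebra k H} {κ : H}

lemma mul_integral_mem (hK : IsHopfSubalgebra k H K) (hκ : IsIdempotentIntegral k H K κ)
    {C D : Submodule k H} (hC : IsSubcoalgebra k H C) (hD : IsSubcoalgebra k H D)
    (h : ∀ d ∈ D, IsCocomm k H d → ∀ c ∈ C, IsCocomm k H c → d * (c * κ) = ε d • (c * κ))
    {z : H} (hz : z ∈ D * C) : z * κ ∈ C.map (LinearMap.mulRight k κ) := by
  have := isSemisimpleRing_colinearEnd hK hκ
  let I : Ideal (colinearEnd K) :=
    { carrier := {T | ∀ x ∈ C, (T : Module.End k H) x = 0}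
      add_mem' := fun hT hU x hx => by simp [hT x hx, hU x hx]
      zero_mem' := fun x _ => by simp
      smul_mem' := fun U T hT x hx => by simp [hT x hx] }
  obtain ⟨e, heI, he⟩ := exists_idempotent_generator (R := colinearEnd K) I
  obtain ⟨c, hcC, hcc, hctr⟩ := exists_character hC
  obtain ⟨d, hdD, hdc, hdtr⟩ := exists_character hD
  set f : H →ₗ[k] k := ε ∘ₗ (e : Module.End k H) with hf
  have hef : (e : Module.End k H) = hitL f := eq_hitL_of_mem_colinearEnd e.2
  have hff (x : H) : f (hitL f x) = f x := by
    have h1 := congrArg (fun T : colinearEnd K => ε ((T : Module.End k H) x)) (he e heI)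
    rw [← hef]
    exact h1
  have hf0 : f (d * c) = 0 := by
    have h1 (x : H) : f (x * κ) = f x := counit_mul_integral hκ e.2 x
    rw [← h1, mul_assoc, h d hdD hdc c hcC hcc, map_smul, h1, hf, LinearMap.comp_apply,
      heI c hcC, map_zero, smul_zero]
  have hez : hitL f z = 0 := by
    induction hz using Submodule.mul_induction_on' with
    | mem_mul_mem x hx y hy => exact idempotent_vanish hff hC hD hctr hdtr hf0 hx hy
    | add x _ y _ hx hy => rw [map_add, hx, hy, add_zero]
  by_contra hzκ
  obtain ⟨g, hg, hg'⟩ := exists_dual_of_notMem _ hzκ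
  refine hg ?_
  let U : colinearEnd K := ⟨_, hitL_mulRight_mem_colinearEnd hK hκ g⟩
  have hU : U ∈ I := by
    intro x hx
    obtain ⟨r, a, b, ha, hb, h⟩ := exists_fin_sum_tmul_of_mem (hC x hx)
    change hitL (g ∘ₗ LinearMap.mulRight k κ) x = 0
    simp only [hitL_apply, h, map_sum, contractLeft_tmul, LinearMap.comp_apply]
    exact Finset.sum_eq_zero fun j _ => by
      rw [hg' _ (Submodule.mem_map_of_mem (ha j)), zero_smul]
  have h1 := congrArg (fun T : colinearEnd K => ε ((T : Module.End k H) z)) (he U hU)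
  simp only [MulMemClass.coe_mul, Module.End.mul_apply, hef, hez, map_zero] at h1
  exact (counit_hitL (g ∘ₗ LinearMap.mulRight k κ) z).symm.trans h1.symm

lemma mul_le_CKsub (hK : IsHopfSubalgebra k H K) (hκ : IsIdempotentIntegral k H K κ)
    {C D : Submodule k H} (hC : IsSubcoalgebra k H C) (hD : IsSubcoalgebra k H D)
    (h : ∀ d ∈ D, IsCocomm k H d → ∀ c ∈ C, IsCocomm k H c → d * (c * κ) = ε d • (c * κ)) :
    D * C ≤ CKsub k H K C := by
  intro y hy
  obtain ⟨f, hf⟩ := exists_hitL_integral_eq_one hK hκ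
  obtain ⟨r, a, b, ha, hb, hab⟩ := exists_fin_sum_tmul_of_mem (hD.mul hC y hy)
  have h1 := congrArg (contractLeft f) (one_tmul_mul_comul hab κ)
  rw [contractLeft_mul_left, LinearMap.mulLeft_one, LinearMap.comp_id, ← hitL_apply, hf,
    mul_one, map_sum] at h1
  rw [h1]
  refine Submodule.sum_mem _ fun j _ => ?_
  rw [contractLeft_mul_left, one_mul]
  refine hitL_mem (hC.mul hK.1) _ ?_
  obtain ⟨c, hc, hcκ⟩ := mul_integral_mem hK hκ hC hD h (hb j)
  rw [← hcκ]
  exact Submodule.mul_mem_mul hc hκ.1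

/-- The coset `CK` is stable under left multiplication by the conjugate `ᶜK`. -/
lemma conjK_mul_mem (hK : IsHopfSubalgebra k H K) (hκ : IsIdempotentIntegral k H K κ)
    {C : Submodule k H} (hC : IsSubcoalgebra k H C) {a x : H} (ha : a ∈ conjK k H K κ C)
    (hx : x ∈ CKsub k H K C) : a * x ∈ CKsub k H K C := by
  have h1 : conjK k H K κ C * CKsub k H K C ≤ CKsub k H K C := by
    rw [Submodule.mul_le]
    intro a ha x hx
    suffices conjK k H K κ C ≤ (CKsub k H K C).comap (LinearMap.mulRight k x) from this ha
    refine sSup_le fun D hD d hd => ?_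
    have h2 : D * CKsub k H K C ≤ CKsub k H K C := by
      rw [CKsub, ← mul_assoc]
      refine (mul_le_mul_left (mul_le_CKsub hK hκ hC hD.1.1 hD.2) _).trans ?_
      rw [CKsub, mul_assoc, K.isIdempotentElem_toSubmodule.eq]
    exact h2 (Submodule.mul_mem_mul hd hx)
  exact h1 (Submodule.mul_mem_mul ha hx)

end Coset

end

end MackeyPaper

namespace MackeyPaper

noncomputable section

section Diagonal

variable {k H : Type*} [Field k] [Ring H] [HopfAlgebra k H]

local notation "Δ" => Coalgebra.comul (R := k) (A := H)
local notation "ε" => Coalgebra.counit (R := k) (A := H)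
local notation "𝖲" => HopfAlgebra.antipode k (A := H)

section Inverse

variable {t : H →ₗ[k] H} {r : ℕ} {x : H} {a b : Fin r → H}

lemma inverse_mul (ht : ∀ x, 𝖲 (t x) = x) (ht' : ∀ x, t (𝖲 x) = x) (x y : H) :
    t (x * y) = t y * t x := by
  conv_lhs => rw [← ht x, ← ht y, ← HopfAlgebra.antipode_mul_antidistrib]
  rw [ht']

lemma inverse_smul_one (ht' : ∀ x, t (𝖲 x) = x) (c : k) : t (c • (1 : H)) = c • 1 := by
  have h1 : t 1 = 1 := by simpa using ht' 1
  rw [map_smul, h1]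

lemma sum_mul_inverse (ht : ∀ x, 𝖲 (t x) = x) (ht' : ∀ x, t (𝖲 x) = x)
    (h : Δ x = ∑ j, a j ⊗ₜ[k] b j) : ∑ j, b j * t (a j) = ε x • 1 := by
  have h1 := congrArg t (sum_mul_antipode h)
  simpa only [map_sum, inverse_mul ht ht', ht', inverse_smul_one ht'] using h1

lemma sum_inverse_mul (ht : ∀ x, 𝖲 (t x) = x) (ht' : ∀ x, t (𝖲 x) = x)
    (h : Δ x = ∑ j, a j ⊗ₜ[k] b j) : ∑ j, t (b j) * a j = ε x • 1 := by
  have h1 := congrArg t (sum_antipode_mul h)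
  simpa only [map_sum, inverse_mul ht ht', ht', inverse_smul_one ht'] using h1

lemma sum_comul_mul_inverse (ht : ∀ x, 𝖲 (t x) = x) (ht' : ∀ x, t (𝖲 x) = x)
    (h : Δ x = ∑ j, a j ⊗ₜ[k] b j) :
    ∑ j, Δ (b j) * (t (a j) ⊗ₜ[k] (1 : H)) = 1 ⊗ₜ x := by
  let G : H ⊗[k] (H ⊗[k] H) →ₗ[k] H ⊗[k] H :=
    TensorProduct.map (LinearMap.mul' k H ∘ₗ (TensorProduct.comm k H H).toLinearMap ∘ₗ
      TensorProduct.map t LinearMap.id) LinearMap.id ∘ₗ (TensorProduct.assoc k H H H).symm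
  have h1 := sum_coassoc h G
  have e1 (u : H) (s : H ⊗[k] H) : G (u ⊗ₜ s) = s * (t u ⊗ₜ 1) := by
    induction s with
    | zero => simp
    | tmul y z => simp [G]
    | add y z hy hz => simp only [TensorProduct.tmul_add, map_add, hy, hz, add_mul]
  have e2 (j : Fin r) : G (TensorProduct.assoc k H H H (Δ (a j) ⊗ₜ b j)) =
      1 ⊗ₜ (ε (a j) • b j) := by
    obtain ⟨m, c, d, h2⟩ := exists_fin_sum_tmul (Δ (a j))
    have h3 := sum_mul_inverse ht ht' h2
    simp only [G, LinearMap.comp_apply, LinearEquiv.coe_coe, LinearEquiv.symm_apply_apply,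
      TensorProduct.map_tmul, h2, map_sum, TensorProduct.comm_tmul, LinearMap.mul'_apply,
      LinearMap.id_apply, h3, TensorProduct.tmul_smul, TensorProduct.smul_tmul']
  simp only [e1, e2] at h1
  rw [h1, ← TensorProduct.tmul_sum, sum_counit_smul_right h]

lemma sum_map_inverse_mul (ht : ∀ x, 𝖲 (t x) = x) (ht' : ∀ x, t (𝖲 x) = x)
    (h : Δ x = ∑ j, a j ⊗ₜ[k] b j) :
    ∑ j, TensorProduct.map t LinearMap.id (Δ (b j)) * (a j ⊗ₜ[k] (1 : H)) = 1 ⊗ₜ x := by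
  let G : H ⊗[k] (H ⊗[k] H) →ₗ[k] H ⊗[k] H :=
    TensorProduct.map (LinearMap.mul' k H ∘ₗ (TensorProduct.comm k H H).toLinearMap ∘ₗ
      TensorProduct.map LinearMap.id t) LinearMap.id ∘ₗ (TensorProduct.assoc k H H H).symm
  have h1 := sum_coassoc h G
  have e1 (u : H) (s : H ⊗[k] H) :
      G (u ⊗ₜ s) = TensorProduct.map t LinearMap.id s * (u ⊗ₜ 1) := by
    induction s with
    | zero => simp
    | tmul y z => simp [G]
    | add y z hy hz => simp only [TensorProduct.tmul_add, map_add, hy, hz, add_mul]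
  have e2 (j : Fin r) : G (TensorProduct.assoc k H H H (Δ (a j) ⊗ₜ b j)) =
      1 ⊗ₜ (ε (a j) • b j) := by
    obtain ⟨m, c, d, h2⟩ := exists_fin_sum_tmul (Δ (a j))
    have h3 := sum_inverse_mul ht ht' h2
    simp only [G, LinearMap.comp_apply, LinearEquiv.coe_coe, LinearEquiv.symm_apply_apply,
      TensorProduct.map_tmul, h2, map_sum, TensorProduct.comm_tmul, LinearMap.mul'_apply,
      LinearMap.id_apply, h3, TensorProduct.tmul_smul, TensorProduct.smul_tmul']
  simp only [e1, e2] at h1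
  rw [h1, ← TensorProduct.tmul_sum, sum_counit_smul_right h]

lemma sum_map_antipode_mul (h : Δ x = ∑ j, a j ⊗ₜ[k] b j) :
    ∑ j, TensorProduct.map LinearMap.id 𝖲 (Δ (a j)) * ((1 : H) ⊗ₜ[k] b j) = x ⊗ₜ 1 := by
  let G : H ⊗[k] (H ⊗[k] H) →ₗ[k] H ⊗[k] H :=
    TensorProduct.map LinearMap.id (LinearMap.mul' k H ∘ₗ TensorProduct.map 𝖲 LinearMap.id)
  have h1 := sum_coassoc h G
  have e1 (u : H) (s : H ⊗[k] H) : G (TensorProduct.assoc k H H H (s ⊗ₜ u)) =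
      TensorProduct.map LinearMap.id 𝖲 s * (1 ⊗ₜ u) := by
    induction s with
    | zero => simp
    | tmul y z => simp [G]
    | add y z hy hz => simp only [TensorProduct.add_tmul, map_add, hy, hz, add_mul]
  have e2 (j : Fin r) : G (a j ⊗ₜ Δ (b j)) = (ε (b j) • a j) ⊗ₜ 1 := by
    obtain ⟨m, c, d, h2⟩ := exists_fin_sum_tmul (Δ (b j))
    have h3 := sum_antipode_mul h2
    simp only [G, TensorProduct.map_tmul, h2, LinearMap.comp_apply, map_sum, LinearMap.mul'_apply,
      LinearMap.id_apply, h3, TensorProduct.tmul_smul, TensorProduct.smul_tmul']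
  simp only [e1, e2] at h1
  rw [← h1, ← TensorProduct.sum_tmul, sum_counit_smul_left h]

end Inverse

variable {U W : Type*} [AddCommGroup U] [Module k U] [Module H U] [IsScalarTower k H U]
  [AddCommGroup W] [Module k W] [Module H W] [IsScalarTower k H W]

variable (k H U W) in
/-- The diagonal action of `H` on a tensor product of two `H`-modules. -/
def diagHom : H →ₐ[k] Module.End k (U ⊗[k] W) :=
  (Module.endTensorEndAlgHom (R := k) (A := k) (S := k)).comp
    ((Algebra.TensorProduct.map (Algebra.lsmul k k U) (Algebra.lsmul k k W)).comp
      (Bialgebra.comulAlgHom k H))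

lemma diagHom_tmul {r : ℕ} {h : H} {a b : Fin r → H} (hab : Δ h = ∑ j, a j ⊗ₜ[k] b j) (u : U)
    (w : W) : diagHom k H U W h (u ⊗ₜ w) = ∑ j, (a j • u) ⊗ₜ[k] (b j • w) := by
  simp only [diagHom, AlgHom.comp_apply, Bialgebra.comulAlgHom_apply, hab, map_sum,
    LinearMap.sum_apply]
  rfl

/-- Maps out of a quotient of a free module `H ⊗ Y` into a representation of `H`. -/
lemma exists_lift_of_span {Y V : Type*} [AddCommGroup Y] [Module k Y] [AddCommGroup V] [Module k V]
    (ρ : H →ₐ[k] Module.End k V) {s : Set (H ⊗[k] Y)} {R : Submodule H (H ⊗[k] Y)}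
    (hR : R = Submodule.span H s) (F : H ⊗[k] Y →ₗ[k] V)
    (hF : ∀ h z, F (h • z) = ρ h (F z)) (hs : ∀ z ∈ s, F z = 0) :
    ∃ Ψ : ((H ⊗[k] Y) ⧸ R) →ₗ[k] V,
      (∀ z, Ψ (Submodule.Quotient.mk z) = F z) ∧ ∀ h q, Ψ (h • q) = ρ h (Ψ q) := by
  subst hR
  have hker : (Submodule.span H s).restrictScalars k ≤ LinearMap.ker F := by
    intro z hz
    rw [Submodule.restrictScalars_mem] at hz
    rw [LinearMap.mem_ker]
    induction hz using Submodule.span_induction with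
    | mem z hz => exact hs z hz
    | zero => exact map_zero F
    | add x y _ _ hx hy => rw [map_add, hx, hy, add_zero]
    | smul h x _ hx => rw [hF, hx, map_zero]
  have key (z : H ⊗[k] Y) : (((Submodule.span H s).restrictScalars k).liftQ F hker ∘ₗ
      (Submodule.Quotient.restrictScalarsEquiv k (Submodule.span H s)).symm.toLinearMap)
      (Submodule.Quotient.mk z) = F z := rfl
  refine ⟨_, key, fun h q => ?_⟩
  induction q using Submodule.Quotient.induction_on with
  | H z => rw [← Submodule.Quotient.mk_smul, key, key, hF]

/-- The map `H ⊗ Y → V`, `h ⊗ y ↦ ρ(h) β(y)`. -/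
def freeLift {Y V : Type*} [AddCommGroup Y] [Module k Y] [AddCommGroup V] [Module k V]
    (ρ : H →ₐ[k] Module.End k V) (β : Y →ₗ[k] V) : H ⊗[k] Y →ₗ[k] V :=
  TensorProduct.lift (β.lcomp k V ∘ₗ ρ.toLinearMap)

lemma freeLift_tmul {Y V : Type*} [AddCommGroup Y] [Module k Y] [AddCommGroup V] [Module k V]
    (ρ : H →ₐ[k] Module.End k V) (β : Y →ₗ[k] V) (h : H) (y : Y) :
    freeLift ρ β (h ⊗ₜ y) = ρ h (β y) := rfl

lemma freeLift_smul {Y V : Type*} [AddCommGroup Y] [Module k Y] [AddCommGroup V] [Module k V]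
    (ρ : H →ₐ[k] Module.End k V) (β : Y →ₗ[k] V) (h : H) (z : H ⊗[k] Y) :
    freeLift ρ β (h • z) = ρ h (freeLift ρ β z) := by
  induction z with
  | zero => simp
  | tmul g y => simp [TensorProduct.smul_tmul', freeLift_tmul]
  | add x y hx hy => rw [smul_add, map_add, hx, hy, map_add, map_add]

end Diagonal

section Induced

variable {k : Type} [Field k] {H : Type} [Ring H] [HopfAlgebra k H]

local notation "Δ" => Coalgebra.comul (R := k) (A := H)
local notation "ε" => Coalgebra.counit (R := k) (A := H)
local notation "𝖲" => HopfAlgebra.antipode k (A := H)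

universe v

variable {L : Subalgebra k H} {N : Type v} [AddCommGroup N] [Module k N] [Module L N]

lemma ind_mk_mem (a : L) (n : N) : (Submodule.Quotient.mk ((a : H) ⊗ₜ[k] n) : Ind k H L N) =
    Submodule.Quotient.mk ((1 : H) ⊗ₜ[k] (a • n)) :=
  (Submodule.Quotient.eq _).2 (Submodule.subset_span ⟨a, n, rfl⟩)

variable [IsScalarTower k L N]

/-- A linear extension to `H` of the action of `L` on `N`. -/
lemma exists_extend_action : ∃ act : H →ₗ[k] Module.End k N,
    ∀ (l : H) (hl : l ∈ L) (n : N), act l n = (⟨l, hl⟩ : L) • n := by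
  obtain ⟨e, he⟩ := L.val.toLinearMap.exists_leftInverse_of_injective
    (LinearMap.ker_eq_bot.2 Subtype.val_injective)
  refine ⟨(Algebra.lsmul k k N).toLinearMap ∘ₗ e, fun l hl n => ?_⟩
  have : e l = ⟨l, hl⟩ := congrArg (fun f => f ⟨l, hl⟩) he
  change e l • n = _
  rw [this]

end Induced

end

end MackeyPaper

namespace MackeyPaper

noncomputable section

variable {k : Type} [Field k] {H : Type} [Ring H] [HopfAlgebra k H]

local notation "Δ" => Coalgebra.comul (R := k) (A := H)
local notation "ε" => Coalgebra.counit (R := k) (A := H)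
local notation "𝖲" => HopfAlgebra.antipode k (A := H)

universe v

section Adjunction

variable {U W X : Type*} [AddCommGroup U] [Module k U] [Module H U] [IsScalarTower k H U]
  [AddCommGroup W] [Module k W] [Module H W] [IsScalarTower k H W]
  [AddCommMonoid X] [Module k X] [Module H X] [IsScalarTower k H X]

variable (U X) in
/-- The action of `H ⊗ H` on `Hom(U, X)` given by `(x ⊗ y) f = y f(t(x) · )`, for an
antimultiplicative map `t`. -/
def homPairAction (t : H →ₗ[k] H) (h1 : t 1 = 1) (hm : ∀ x y, t (x * y) = t y * t x) :
    H ⊗[k] H →ₐ[k] Module.End k (U →ₗ[k] X) :=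
  Algebra.TensorProduct.lift
    (AlgHom.ofLinearMap
      ((LinearMap.llcomp k U U X).flip ∘ₗ (Algebra.lsmul k k U).toLinearMap ∘ₗ t)
      (by ext; simp [h1]) (fun x y => by ext; simp [hm]))
    (Algebra.lsmul k k (U →ₗ[k] X)) (fun x y => (commute_iff_eq _ _).2 (by ext; simp))

lemma homPairAction_tmul (t : H →ₗ[k] H) (h1 : t 1 = 1) (hm : ∀ x y, t (x * y) = t y * t x)
    (x y : H) (f : U →ₗ[k] X) (u : U) :
    homPairAction U X t h1 hm (x ⊗ₜ y) f u = y • f (t x • u) := by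
  simp [homPairAction]

variable {L : Subalgebra k H} {N : Type v} [AddCommGroup N] [Module k N] [Module L N]

/-- A pairing `U × N → X` that is `L`-equivariant extends to an `H`-equivariant map on
`U ⊗ (H ⊗_L N)`. -/
lemma exists_lift_tensor_ind (hL : IsHopfSubalgebra k H L) {t : H →ₗ[k] H}
    (ht : ∀ x, 𝖲 (t x) = x) (ht' : ∀ x, t (𝖲 x) = x) {act : H →ₗ[k] Module.End k N}
    (hact : ∀ (l : H) (hl : l ∈ L) (n : N), act l n = (⟨l, hl⟩ : L) • n)
    (θ : U →ₗ[k] N →ₗ[k] X)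
    (hθ : ∀ l ∈ L, ∀ (r : ℕ) (a b : Fin r → H), Δ l = ∑ j, a j ⊗ₜ[k] b j → ∀ u n,
      ∑ j, θ (a j • u) (act (b j) n) = l • θ u n) :
    ∃ Φ : U ⊗[k] Ind k H L N →ₗ[k] X,
      (∀ u n, Φ (u ⊗ₜ Submodule.Quotient.mk (1 ⊗ₜ n)) = θ u n) ∧
      ∀ h z, Φ (diagHom k H U (Ind k H L N) h z) = h • Φ z := by
  let : AddCommGroup X := Module.addCommMonoidToAddCommGroup k
  have h1 : t 1 = 1 := by simpa using ht' 1
  set A := homPairAction U X t h1 (inverse_mul ht ht') with hA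
  obtain ⟨Φ, hΦ, hΦ'⟩ := exists_lift_of_span (A.comp (Bialgebra.comulAlgHom k H))
    (show indRel k H L N = _ from rfl)
    (freeLift (A.comp (Bialgebra.comulAlgHom k H)) θ.flip) (freeLift_smul _ _) (by
      rintro _ ⟨l, n, rfl⟩
      rw [map_sub, freeLift_tmul, freeLift_tmul, map_one, sub_eq_zero]
      ext u
      obtain ⟨r, a, b, ha, hb, hab⟩ := exists_fin_sum_tmul_of_mem (hL.1 l l.2)
      have h2 := congrArg (TensorProduct.lift θ ∘ₗ TensorProduct.map
        (LinearMap.toSpanSingleton H U u |>.restrictScalars k) (act.flip n))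
        (sum_comul_mul_inverse ht ht' hab)
      have h3 (x y : H) (hy : y ∈ L) : (TensorProduct.lift θ ∘ₗ TensorProduct.map
          (LinearMap.toSpanSingleton H U u |>.restrictScalars k) (act.flip n))
          (Δ y * (t x ⊗ₜ[k] (1 : H))) = y • θ (t x • u) n := by
        obtain ⟨s, c, d, hcd⟩ := exists_fin_sum_tmul (Δ y)
        rw [← hθ y hy s c d hcd, hcd]
        simp [Finset.sum_mul, mul_smul]
      rw [map_sum, Finset.sum_congr rfl fun j _ => h3 (a j) (b j) (hb j)] at h2
      simp only [AlgHom.comp_apply, Bialgebra.comulAlgHom_apply, hab, map_sum,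
        LinearMap.sum_apply, hA, homPairAction_tmul, LinearMap.flip_apply, h2]
      simp [hact _ l.2])
  refine ⟨TensorProduct.lift Φ.flip, fun u n => ?_, fun h z => ?_⟩
  · have := hΦ (1 ⊗ₜ n)
    rw [freeLift_tmul, map_one] at this
    rw [TensorProduct.lift.tmul, LinearMap.flip_apply]
    exact congrArg (fun f => f u) this
  · induction z with
    | zero => simp
    | add y z hy hz => simp only [map_add, hy, hz, smul_add]
    | tmul u w =>
      obtain ⟨r, a, b, hab⟩ := exists_fin_sum_tmul (Δ h)
      let E : H ⊗[k] H →ₗ[k] X := TensorProduct.lift (LinearMap.mk₂ k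
        (fun x y => y • Φ w (x • u)) (by intros; simp [add_smul])
        (by intros; rw [smul_assoc, map_smul, smul_comm])
        (by intros; simp [add_smul]) (by intros; simp))
      have h2 := congrArg E (sum_map_inverse_mul ht ht' hab)
      have h3 (x y : H) : E (TensorProduct.map t LinearMap.id (Δ y) * (x ⊗ₜ[k] (1 : H))) =
          Φ (y • w) (x • u) := by
        obtain ⟨s, c, d, hcd⟩ := exists_fin_sum_tmul (Δ y)
        rw [hΦ']
        simp [E, Finset.sum_mul, mul_smul, hcd, hA, homPairAction_tmul]
      simp only [map_sum, h3] at h2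
      rw [diagHom_tmul hab]
      simpa [E] using h2

/-- The subspaces `u ⊗ (1 ⊗ n)` generate `U ⊗ (H ⊗_L N)` under the diagonal action. -/
lemma eq_top_of_diagHom_mem {t : H →ₗ[k] H}
    (ht : ∀ x, 𝖲 (t x) = x) (ht' : ∀ x, t (𝖲 x) = x) (P : Submodule k (U ⊗[k] Ind k H L N))
    (hP : ∀ h, ∀ z ∈ P, diagHom k H U (Ind k H L N) h z ∈ P)
    (h1 : ∀ u n, u ⊗ₜ Submodule.Quotient.mk (1 ⊗ₜ n) ∈ P) : P = ⊤ := by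
  rw [eq_top_iff]
  rintro z -
  induction z with
  | zero => exact P.zero_mem
  | add y z hy hz => exact P.add_mem hy hz
  | tmul u w =>
    induction w using Submodule.Quotient.induction_on with
    | H w =>
      induction w with
      | zero => simp
      | add y z hy hz =>
        rw [Submodule.Quotient.mk_add, TensorProduct.tmul_add]
        exact P.add_mem hy hz
      | tmul h n =>
        obtain ⟨r, a, b, hab⟩ := exists_fin_sum_tmul (Δ h)
        let w : Ind k H L N := Submodule.Quotient.mk (1 ⊗ₜ n)
        let E : H ⊗[k] H →ₗ[k] U ⊗[k] Ind k H L N := TensorProduct.map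
          (LinearMap.toSpanSingleton H U u |>.restrictScalars k)
          (LinearMap.toSpanSingleton H _ w |>.restrictScalars k)
        have h2 := congrArg E (sum_comul_mul_inverse ht ht' hab)
        have h3 (x y : H) : E (Δ y * (t x ⊗ₜ[k] (1 : H))) =
            diagHom k H U (Ind k H L N) y ((t x • u) ⊗ₜ w) := by
          obtain ⟨s, c, d, hcd⟩ := exists_fin_sum_tmul (Δ y)
          rw [diagHom_tmul hcd, hcd]
          simp [E, Finset.sum_mul, mul_smul]
        simp only [map_sum, h3] at h2
        have h4 : u ⊗ₜ[k] (Submodule.Quotient.mk (h ⊗ₜ n) : Ind k H L N) = E (1 ⊗ₜ h) := by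
          simp [E, w, ← Submodule.Quotient.mk_smul, TensorProduct.smul_tmul']
        rw [h4, ← h2]
        exact P.sum_mem fun j _ => hP _ _ (h1 _ _)

end Adjunction

end

end MackeyPaper

open DirectSum

namespace MackeyPaper

noncomputable section

variable {k : Type} [Field k] {H : Type} [Ring H] [HopfAlgebra k H]

local notation "Δ" => Coalgebra.comul (R := k) (A := H)
local notation "ε" => Coalgebra.counit (R := k) (A := H)
local notation "𝖲" => HopfAlgebra.antipode k (A := H)

universe v

section Twist

variable {L : Subalgebra k H} {Y N T : Type*} [AddCommGroup Y] [Module k Y] [AddCommGroup N]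
  [Module k N] [AddCommGroup T] [Module k T] [Module H T] [IsScalarTower k H T]

/-- The map `(l, y, n) ↦ ∑ l₁ τ(y, S(l₂) n)`. -/
def twist (act : H →ₗ[k] Module.End k N) (τ : Y →ₗ[k] N →ₗ[k] T) : H →ₗ[k] Y →ₗ[k] N →ₗ[k] T :=
  TensorProduct.lift (LinearMap.mk₂ k (fun x y => x • (τ.compl₂ (act (𝖲 y))))
    (by intros; ext; simp [add_smul]) (by intros; ext; simp)
    (by intros; ext; simp) (by intros; ext; simpa using smul_comm _ _ _)) ∘ₗ Δ

lemma twist_apply (act : H →ₗ[k] Module.End k N) (τ : Y →ₗ[k] N →ₗ[k] T) {r : ℕ} {l : H}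
    {a b : Fin r → H} (h : Δ l = ∑ j, a j ⊗ₜ[k] b j) (y : Y) (n : N) :
    twist act τ l y n = ∑ j, a j • τ y (act (𝖲 (b j)) n) := by
  simp [twist, h, LinearMap.sum_apply]

lemma twist_one {act : H →ₗ[k] Module.End k N} (h1 : act 1 = 1) (τ : Y →ₗ[k] N →ₗ[k] T) (y : Y)
    (n : N) : twist act τ 1 y n = τ y n := by
  rw [twist_apply act τ (r := 1) (a := fun _ => 1) (b := fun _ => 1)
    (by simp [Algebra.TensorProduct.one_def])]
  simp [h1]

lemma twist_mul (hL : IsHopfSubalgebra k H L) {act : H →ₗ[k] Module.End k N}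
    (hm : ∀ l ∈ L, ∀ l' ∈ L, act (l * l') = act l * act l') (τ : Y →ₗ[k] N →ₗ[k] T) {r : ℕ}
    {l g : H} {a b : Fin r → H} (hb : ∀ j, b j ∈ L) (h : Δ l = ∑ j, a j ⊗ₜ[k] b j) (hg : g ∈ L)
    (y : Y) (n : N) :
    twist act τ (l * g) y n = ∑ j, a j • twist act τ g y (act (𝖲 (b j)) n) := by
  obtain ⟨s, c, d, -, hd, hcd⟩ := exists_fin_sum_tmul_of_mem (hL.1 g hg)
  have key (j : Fin r) (i : Fin s) : act (𝖲 (b j * d i)) = act (𝖲 (d i)) * act (𝖲 (b j)) := by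
    rw [HopfAlgebra.antipode_mul_antidistrib, hm _ (hL.2 _ (hd i)) _ (hL.2 _ (hb j))]
  have h2 : Δ (l * g) = ∑ p : Fin r × Fin s, (a p.1 * c p.2) ⊗ₜ[k] (b p.1 * d p.2) := by
    rw [comul_mul', h, hcd, Finset.sum_mul_sum, ← Finset.univ_product_univ, Finset.sum_product]
    simp
  simp only [twist, LinearMap.comp_apply, h2, map_sum, LinearMap.sum_apply, hcd, Finset.smul_sum]
  rw [← Finset.univ_product_univ, Finset.sum_product]
  simp [key, mul_smul]

/-- Equivariance of the twisted pairing. -/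
lemma sum_twist_mul (hL : IsHopfSubalgebra k H L) {act : H →ₗ[k] Module.End k N} (h1 : act 1 = 1)
    (hm : ∀ l ∈ L, ∀ l' ∈ L, act (l * l') = act l * act l') (τ : Y →ₗ[k] N →ₗ[k] T) {r : ℕ}
    {l g : H} {a b : Fin r → H} (ha : ∀ j, a j ∈ L) (hb : ∀ j, b j ∈ L)
    (h : Δ l = ∑ j, a j ⊗ₜ[k] b j) (hg : g ∈ L) (y : Y) (n : N) :
    ∑ j, twist act τ (a j * g) y (act (b j) n) = l • twist act τ g y n := by
  let E : H ⊗[k] H →ₗ[k] T := TensorProduct.lift (LinearMap.mk₂ k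
    (fun p q => p • twist act τ g y (act q n)) (by intros; simp [add_smul]) (by intros; simp)
    (by intros; simp) (by intros; simpa using smul_comm _ _ _))
  have h2 := congrArg E (sum_map_antipode_mul h)
  have h3 (p q : H) (hp : p ∈ L) (hq : q ∈ L) :
      E (TensorProduct.map LinearMap.id 𝖲 (Δ p) * ((1 : H) ⊗ₜ[k] q)) =
      twist act τ (p * g) y (act q n) := by
    obtain ⟨s, c, d, -, hd, hcd⟩ := exists_fin_sum_tmul_of_mem (hL.1 p hp)
    have key (i : Fin s) : act (𝖲 (d i) * q) = act (𝖲 (d i)) * act q := hm _ (hL.2 _ (hd i)) _ hq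
    rw [twist_mul hL hm τ hd hcd hg]
    simp [E, Finset.sum_mul, hcd, key]
  rw [map_sum, Finset.sum_congr rfl fun j _ => h3 _ _ (ha j) (hb j)] at h2
  simpa [E, h1] using h2

end Twist

section Components

variable {L K : Subalgebra k H} {Λ : H} {C : Submodule k H}
  {M : Type v} [AddCommGroup M] [Module k M] {N : Type v} [AddCommGroup N] [Module k N] [Module L N]

lemma ckm_eq_top (P : Submodule k (CKM k H K M C)) (hP : ∀ x m, ckmk k H K M C x m ∈ P) :
    P = ⊤ := by
  rw [eq_top_iff]
  rintro w -
  change CKsub k H K C ⊗[k] M at w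
  induction w with
  | zero => exact P.zero_mem
  | tmul x m => exact hP x m
  | add y z hy hz => exact P.add_mem hy hz

lemma ckmn_eq_top (P : Submodule k (CKMN k H L K C M N)) (hP : ∀ w n, ckmnk k H L K C M N w n ∈ P) :
    P = ⊤ := by
  rw [eq_top_iff]
  rintro z -
  change CKM k H K M C ⊗[k] N at z
  induction z with
  | zero => exact P.zero_mem
  | tmul w n => exact hP w n
  | add y z hy hz => exact P.add_mem hy hz

variable [Module K M]

lemma comp_eq_top (P : Submodule k (Comp k H L K Λ C M))
    (hP : ∀ l x m, Submodule.Quotient.mk (lcmk k H L K C M l (ckmk k H K M C x m)) ∈ P) :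
    P = ⊤ := by
  rw [eq_top_iff]
  rintro q -
  induction q using Submodule.Quotient.induction_on with
  | H z =>
    suffices h : P.comap (Submodule.mkQ (compRel k H L K Λ C M)) = ⊤ by
      have h1 : z ∈ (⊤ : Submodule k (LCM k H L K C M)) := trivial
      rwa [← h] at h1
    rw [eq_top_iff]
    rintro z -
    change L ⊗[k] CKM k H K M C at z
    induction z with
    | zero => exact Submodule.zero_mem _
    | add y z hy hz => exact Submodule.add_mem _ hy hz
    | tmul l w =>
      have h1 := ckm_eq_top ((P.comap (Submodule.mkQ (compRel k H L K Λ C M))).comap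
        (show CKM k H K M C →ₗ[k] LCM k H L K C M from TensorProduct.mk k L _ l)) (hP l)
      have h2 : w ∈ (⊤ : Submodule k (CKM k H K M C)) := trivial
      rwa [← h1] at h2

variable [IsScalarTower k K M] [IsScalarTower k L N]

variable (L K Λ C M N) in
/-- The pairing `ᶜM × N → (ᶜM ⊗ N)↑^H`, defined on `CK ⊗_k M`. -/
def tpPair : CKM k H K M C →ₗ[k] N →ₗ[k] TPInd k H L K Λ C M N :=
  LinearMap.mk₂ k (fun w n => Submodule.Quotient.mk (1 ⊗ₜ[k] ckmnk k H L K C M N w n))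
    (fun w w' n => by
      rw [← Submodule.Quotient.mk_add, ← TensorProduct.tmul_add]
      exact congrArg (fun z => Submodule.Quotient.mk (1 ⊗ₜ[k] z)) (TensorProduct.add_tmul w w' n))
    (fun c w n => by
      rw [← Submodule.Quotient.mk_smul, ← TensorProduct.tmul_smul]
      exact congrArg (fun z => Submodule.Quotient.mk (1 ⊗ₜ[k] z))
        (TensorProduct.smul_tmul' c w n).symm)
    (fun w n n' => by
      rw [← Submodule.Quotient.mk_add, ← TensorProduct.tmul_add]
      exact congrArg (fun z => Submodule.Quotient.mk (1 ⊗ₜ[k] z)) (TensorProduct.tmul_add w n n'))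
    (fun c w n => by
      rw [← Submodule.Quotient.mk_smul, ← TensorProduct.tmul_smul]
      exact congrArg (fun z => Submodule.Quotient.mk (1 ⊗ₜ[k] z))
        (TensorProduct.tmul_smul c w n))

lemma smul_tpPair (h : H) (w : CKM k H K M C) (n : N) : h • tpPair L K Λ C M N w n =
    Submodule.Quotient.mk (h ⊗ₜ[k] ckmnk k H L K C M N w n) := by
  rw [tpPair, LinearMap.mk₂_apply, ← Submodule.Quotient.mk_smul, TensorProduct.smul_tmul',
    smul_eq_mul, mul_one]

lemma tpInd_eq_top (P : Submodule k (TPInd k H L K Λ C M N))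
    (hP : ∀ (h : H) x m n, h • tpPair L K Λ C M N (ckmk k H K M C x m) n ∈ P) : P = ⊤ := by
  rw [eq_top_iff]
  rintro q -
  induction q using Submodule.Quotient.induction_on with
  | H z =>
    induction z with
    | zero => exact P.zero_mem
    | add y z hy hz => rw [Submodule.Quotient.mk_add]; exact P.add_mem hy hz
    | tmul h z =>
      have h1 := ckmn_eq_top (P.comap ((Submodule.mkQ (tpRel k H L K Λ C M N)).restrictScalars k ∘ₗ
        TensorProduct.mk k H _ h)) fun w n => by
          have h2 := ckm_eq_top (P.comap (Algebra.lsmul k k _ h ∘ₗ (tpPair L K Λ C M N).flip n))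
            (fun x m => hP h x m n)
          have h3 : w ∈ (⊤ : Submodule k (CKM k H K M C)) := trivial
          rw [← h2] at h3
          rw [Submodule.mem_comap]
          change Submodule.Quotient.mk (h ⊗ₜ[k] ckmnk k H L K C M N w n) ∈ P
          rw [← smul_tpPair]
          exact h3
      have h3 : z ∈ (⊤ : Submodule k (CKMN k H L K C M N)) := trivial
      rwa [← h1] at h3

lemma tpPair_mul_right (x : CKsub k H K C) (a : K) (m : M) (n : N)
    (hxa : (x : H) * a ∈ CKsub k H K C) :
    tpPair L K Λ C M N (ckmk k H K M C ⟨x * a, hxa⟩ m) n =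
      tpPair L K Λ C M N (ckmk k H K M C x (a • m)) n :=
  (Submodule.Quotient.eq _).2 (Submodule.subset_span (Or.inl ⟨x, a, m, n, hxa, rfl⟩))

lemma smul_tpPair_of_mem {b : H} (hbL : b ∈ L) (hb : b ∈ conjK k H K Λ C) (x : CKsub k H K C)
    (m : M) (n : N) {r : ℕ} {b₁ b₂ : Fin r → H} (hb₁ : ∀ j, b₁ j * (x : H) ∈ CKsub k H K C)
    (hb₂ : ∀ j, b₂ j ∈ L) (h : Δ b = ∑ j, b₁ j ⊗ₜ[k] b₂ j) :
    b • tpPair L K Λ C M N (ckmk k H K M C x m) n =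
      ∑ j, tpPair L K Λ C M N (ckmk k H K M C ⟨b₁ j * x, hb₁ j⟩ m) ((⟨b₂ j, hb₂ j⟩ : L) • n) := by
  rw [smul_tpPair]
  have := (Submodule.Quotient.eq (tpRel k H L K Λ C M N)).2 (Submodule.subset_span
    (Or.inr ⟨b, hbL, hb, x, m, n, r, b₁, b₂, hb₁, hb₂, h, rfl⟩))
  rw [this, ← Submodule.mkQ_apply, map_sum]
  rfl

lemma twist_tpPair_of_mem (hL : IsHopfSubalgebra k H L)
    (hconj : ∀ a ∈ conjK k H K Λ C, ∀ x ∈ CKsub k H K C, a * x ∈ CKsub k H K C)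
    {act : H →ₗ[k] Module.End k N}
    (hact : ∀ (l : H) (hl : l ∈ L) (n : N), act l n = (⟨l, hl⟩ : L) • n)
    {a : H} (haL : a ∈ L) (ha : a ∈ conjK k H K Λ C) (x : CKsub k H K C) (m : M) (n : N) :
    twist act (tpPair L K Λ C M N) a (ckmk k H K M C x m) n =
      tpPair L K Λ C M N (ckmk k H K M C ⟨a * x, hconj a ha x x.2⟩ m) n := by
  obtain ⟨e, he⟩ := (CKsub k H K C).subtype.exists_leftInverse_of_injective (by simp)
  have he' (z : H) (hz : z ∈ CKsub k H K C) : e z = ⟨z, hz⟩ :=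
    congrArg (fun f => f ⟨z, hz⟩) he
  have hact1 (n : N) : act 1 n = n := (hact 1 L.one_mem n).trans (one_smul L n)
  have hsub := IsSubcoalgebra.inf hL.1 (isSubcoalgebra_conjK K Λ C)
  obtain ⟨r, c, d, hc, hd, hcd⟩ := exists_fin_sum_tmul_of_mem (hsub a ⟨haL, ha⟩)
  let ck : H →ₗ[k] CKM k H K M C := (TensorProduct.mk k (CKsub k H K C) M).flip m ∘ₗ e ∘ₗ
    LinearMap.mulRight k (x : H)
  have hck (z : H) (hz : z * x ∈ CKsub k H K C) : ck z = ckmk k H K M C ⟨z * x, hz⟩ m :=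
    congrArg (fun y => ckmk k H K M C y m) (he' _ hz)
  let E : H ⊗[k] H →ₗ[k] TPInd k H L K Λ C M N :=
    TensorProduct.lift (tpPair L K Λ C M N) ∘ₗ TensorProduct.map ck (act.flip n)
  have h1 := congrArg E (sum_comul_mul_tmul_antipode hcd)
  have h2 (j : Fin r) : E (Δ (c j) * ((1 : H) ⊗ₜ[k] 𝖲 (d j))) =
      c j • tpPair L K Λ C M N (ckmk k H K M C x m) (act (𝖲 (d j)) n) := by
    obtain ⟨s, p, q, hp, hq, hpq⟩ := exists_fin_sum_tmul_of_mem (hsub (c j) (hc j))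
    rw [smul_tpPair_of_mem (hc j).1 (hc j).2 x m _ (fun i => hconj _ (hp i).2 x x.2)
      (fun i => (hq i).1) hpq, hpq, Finset.sum_mul, map_sum]
    refine Finset.sum_congr rfl fun i _ => ?_
    have h3 : act (q i * 𝖲 (d j)) n = (⟨q i, (hq i).1⟩ : L) • act (𝖲 (d j)) n := by
      rw [hact _ (mul_mem (hq i).1 (hL.2 _ (hd j).1)), hact _ (hL.2 _ (hd j).1), ← mul_smul]
      rfl
    simp [E, h3, hck _ (hconj _ (hp i).2 x x.2)]
  rw [map_sum, Finset.sum_congr rfl fun j _ => h2 j] at h1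
  rw [twist_apply act _ hcd, h1]
  simp [E, hact1, hck _ (hconj a ha x x.2)]

/-- The pairing `(L ⊗_{L ∩ ᶜK} ᶜM) × N → (ᶜM ⊗ N)↑^H` induced by `twist`. -/
lemma exists_comp_pairing (hL : IsHopfSubalgebra k H L)
    (hconj : ∀ a ∈ conjK k H K Λ C, ∀ x ∈ CKsub k H K C, a * x ∈ CKsub k H K C)
    {act : H →ₗ[k] Module.End k N}
    (hact : ∀ (l : H) (hl : l ∈ L) (n : N), act l n = (⟨l, hl⟩ : L) • n)
    (hm : ∀ l ∈ L, ∀ l' ∈ L, act (l * l') = act l * act l') :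
    ∃ θ : Comp k H L K Λ C M →ₗ[k] N →ₗ[k] TPInd k H L K Λ C M N, ∀ (l : L) w n,
      θ (Submodule.Quotient.mk (lcmk k H L K C M l w)) n =
        twist act (tpPair L K Λ C M N) l w n := by
  let F : LCM k H L K C M →ₗ[k] N →ₗ[k] TPInd k H L K Λ C M N :=
    TensorProduct.lift (twist act (tpPair L K Λ C M N) ∘ₗ L.val.toLinearMap)
  have hF (l : L) (w : CKM k H K M C) : F (lcmk k H L K C M l w) =
    twist act (tpPair L K Λ C M N) l w := rfl
  suffices hker : compRel k H L K Λ C M ≤ LinearMap.ker F from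
    ⟨(compRel k H L K Λ C M).liftQ F hker, fun l w n => rfl⟩
  refine Submodule.span_le.2 ?_
  rintro _ (⟨l, a, haL, ha, x, m, hax, rfl⟩ | ⟨l, x, a, m, hxa, rfl⟩)
  · rw [SetLike.mem_coe, LinearMap.mem_ker, map_sub, hF, hF, sub_eq_zero]
    ext n
    obtain ⟨r, c, d, hc, hd, hcd⟩ := exists_fin_sum_tmul_of_mem (hL.1 l l.2)
    simp only [twist_mul hL hm _ hd hcd haL, twist_apply _ _ hcd,
      twist_tpPair_of_mem hL hconj hact haL ha]
  · rw [SetLike.mem_coe, LinearMap.mem_ker, map_sub, hF, hF, sub_eq_zero]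
    ext n
    obtain ⟨r, c, d, hc, hd, hcd⟩ := exists_fin_sum_tmul_of_mem (hL.1 l l.2)
    simp only [twist_apply _ _ hcd, tpPair_mul_right]

/-- The canonical map `(ᶜM ⊗ N)↑^H → M↑^H ⊗ N↑^H`. -/
lemma exists_tpInd_map :
    ∃ Ψ : TPInd k H L K Λ C M N →ₗ[k] Ind k H K M ⊗[k] Ind k H L N,
      (∀ x m n, Ψ (tpPair L K Λ C M N (ckmk k H K M C x m) n) =
        Submodule.Quotient.mk ((x : H) ⊗ₜ m) ⊗ₜ Submodule.Quotient.mk (1 ⊗ₜ n)) ∧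
      ∀ h q, Ψ (h • q) = diagHom k H (Ind k H K M) (Ind k H L N) h (Ψ q) := by
  let f : CKM k H K M C →ₗ[k] Ind k H K M := (Submodule.mkQ (indRel k H K M)).restrictScalars k ∘ₗ
    TensorProduct.map (CKsub k H K C).subtype LinearMap.id
  let g : N →ₗ[k] Ind k H L N := (Submodule.mkQ (indRel k H L N)).restrictScalars k ∘ₗ
    TensorProduct.mk k H N 1
  let β : CKMN k H L K C M N →ₗ[k] Ind k H K M ⊗[k] Ind k H L N := TensorProduct.map f g
  have hβ (x : CKsub k H K C) (m : M) (n : N) : β (ckmnk k H L K C M N (ckmk k H K M C x m) n) =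
      Submodule.Quotient.mk ((x : H) ⊗ₜ m) ⊗ₜ Submodule.Quotient.mk (1 ⊗ₜ n) := rfl
  obtain ⟨Ψ, hΨ, hΨ'⟩ := exists_lift_of_span (diagHom k H (Ind k H K M) (Ind k H L N))
    (show tpRel k H L K Λ C M N = _ from rfl) (freeLift _ β) (freeLift_smul _ _) (by
      rintro _ (⟨x, a, m, n, hxa, rfl⟩ | ⟨b, hbL, hb, x, m, n, r, b₁, b₂, hb₁, hb₂, h, rfl⟩)
      · rw [map_sub, freeLift_tmul, freeLift_tmul, hβ, hβ, sub_eq_zero]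
        congr 2
        have := congrArg (fun q => (x : H) • q) (ind_mk_mem a m)
        simpa only [← Submodule.Quotient.mk_smul, TensorProduct.smul_tmul', smul_eq_mul,
          mul_one] using this
      · rw [map_sub, map_sum, sub_eq_zero]
        simp only [freeLift_tmul, hβ, map_one, diagHom_tmul h, Module.End.one_apply,
          ← Submodule.Quotient.mk_smul, TensorProduct.smul_tmul', smul_eq_mul, mul_one,
          ← ind_mk_mem])
  refine ⟨Ψ, fun x m n => ?_, hΨ'⟩
  refine (hΨ _).trans ?_
  rw [freeLift_tmul, map_one, hβ]
  rfl

end Components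

section DirectSum

variable {ι : Type*} [DecidableEq ι] {Z : ι → Type*} [∀ i, AddCommMonoid (Z i)]
  [∀ i, Module k (Z i)]

lemma directSum_eq_top (P : Submodule k (⨁ i, Z i)) (hP : ∀ i z, DirectSum.of Z i z ∈ P) :
    P = ⊤ := by
  rw [eq_top_iff]
  rintro z -
  induction z using DirectSum.induction_on with
  | zero => exact P.zero_mem
  | of i z => exact hP i z
  | add y z hy hz => exact P.add_mem hy hz

lemma smul_directSum_of [∀ i, Module H (Z i)] (h : H) (i : ι) (z : Z i) :
    h • DirectSum.of Z i z = DirectSum.of Z i (h • z) :=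
  (map_smul (DirectSum.lof H ι Z i) h z).symm

lemma toModule_smul [∀ i, Module H (Z i)] {V : Type*} [AddCommMonoid V] [Module k V]
    (ρ : H →ₐ[k] Module.End k V) (Ψ : ∀ i, Z i →ₗ[k] V) (hΨ : ∀ i h z, Ψ i (h • z) = ρ h (Ψ i z))
    (h : H) (z : ⨁ i, Z i) :
    DirectSum.toModule k ι V Ψ (h • z) = ρ h (DirectSum.toModule k ι V Ψ z) := by
  induction z using DirectSum.induction_on with
  | zero => simp
  | of i z =>
    rw [smul_directSum_of, ← DirectSum.lof_eq_of k, ← DirectSum.lof_eq_of k,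
      DirectSum.toModule_lof, DirectSum.toModule_lof, hΨ]
  | add y z hy hz => rw [smul_add, map_add, map_add, map_add, hy, hz]

end DirectSum

end

end MackeyPaper

namespace MackeyPaper

noncomputable section

universe v

variable (k : Type) [Field k] [CharZero k] [IsAlgClosed k]
variable (H : Type) [Ring H] [HopfAlgebra k H]

section Statements

variable [FiniteDimensional k H] [IsSemisimpleRing H]

set_option maxHeartbeats 400000 in
/-- Theorem 7: suppose `(L, K)` is a Mackey pair of Hopf
subalgebras of the semisimple Hopf algebra `H`.  Then for any
finite-dimensional `K`-module `M` and `L`-module `N` there is a canonical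
isomorphism of `H`-modules
`M↑_K^H ⊗ N↑_L^H ≅ ⊕_{C ∈ L\H/K} ((ᶜM)↓_{L∩ᶜK} ⊗ N↓_{L∩ᶜK})↑_{L∩ᶜK}^H`;
the diagonal `H`-module structure on the left-hand side is expressed on
generators via expansions `Δ(h) = ∑ h₁ ⊗ h₂`. -/
theorem statement_2 (L K : Subalgebra k H)
    (hL : IsHopfSubalgebra k H L) (hK : IsHopfSubalgebra k H K)
    (Λ : H) (hΛ : IsIdempotentIntegral k H K Λ)
    (hMackey : IsMackeyPair.{v} k H L K Λ)
    (M : Type v) [AddCommGroup M] [Module k M] [Module ↥K M]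
    [IsScalarTower k ↥K M] [Module.Finite k M]
    (N : Type v) [AddCommGroup N] [Module k N] [Module ↥L N]
    [IsScalarTower k ↥L N] [Module.Finite k N]
    (ι : Type) [DecidableEq ι] (rep : ι → Submodule k H)
    (hrep : IsDoubleCosetReps k H L K rep) :
    ∃ φ : ((Ind k H K M) ⊗[k] (Ind k H L N)) ≃ₗ[k]
        (⨁ i : ι, TPInd k H L K Λ (rep i) M N),
      ∀ (h : H) (u : Ind k H K M) (w : Ind k H L N) (r : ℕ) (h₁ h₂ : Fin r → H),
        Coalgebra.comul (R := k) h = ∑ j, h₁ j ⊗ₜ[k] h₂ j →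
        φ (∑ j, (h₁ j • u) ⊗ₜ[k] (h₂ j • w)) = h • φ (u ⊗ₜ[k] w) := by
  obtain ⟨κ, hκ⟩ := exists_integral (k := k) (H := H)
  obtain ⟨f, hf⟩ := exists_hitL_integral_eq_one isHopfSubalgebra_top hκ
  let S := LinearEquiv.ofBijective (HopfAlgebra.antipode k (A := H)) (antipode_bijective hκ hf)
  let t : H →ₗ[k] H := S.symm.toLinearMap
  have ht (x : H) : HopfAlgebra.antipode k (t x) = x := S.apply_symm_apply x
  have ht' (x : H) : t (HopfAlgebra.antipode k x) = x := S.symm_apply_apply x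
  obtain ⟨act, hact⟩ := exists_extend_action (k := k) (H := H) (L := L) (N := N)
  have hact1 : act 1 = 1 := by
    ext n
    exact (hact 1 L.one_mem n).trans (one_smul L n)
  have hactm : ∀ l ∈ L, ∀ l' ∈ L, act (l * l') = act l * act l' := by
    intro l hl l' hl'
    ext n
    rw [Module.End.mul_apply, hact _ (mul_mem hl hl'), hact _ hl, hact _ hl', ← mul_smul]
    rfl
  have hconj (i : ι) : ∀ a ∈ conjK k H K Λ (rep i), ∀ x ∈ CKsub k H K (rep i),
      a * x ∈ CKsub k H K (rep i) := fun _ ha _ hx => conjK_mul_mem hK hΛ (hrep.1 i).1 ha hx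
  obtain ⟨π, hπ, hπ'⟩ := hMackey M ι rep hrep
  choose θ hθ using fun i => exists_comp_pairing (M := M) hL (hconj i) hact hactm
  choose Ψ hΨ hΨ' using fun i => exists_tpInd_map (L := L) (K := K) (Λ := Λ) (C := rep i)
    (M := M) (N := N)
  have hspan (P : Submodule k (Ind k H K M))
      (hP : ∀ i (l : L) (x : CKsub k H K (rep i)) (m : M),
        Submodule.Quotient.mk (((l : H) * (x : H)) ⊗ₜ[k] m) ∈ P) : P = ⊤ := by
    have h1 : P.comap π = ⊤ := directSum_eq_top _ fun i z => by
      have h2 := comp_eq_top ((P.comap π).comap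
        (DirectSum.lof k ι (fun i => Comp k H L K Λ (rep i) M) i)) fun l x m => by
          rw [Submodule.mem_comap, Submodule.mem_comap, DirectSum.lof_eq_of, hπ']
          exact hP i l x m
      have h3 : z ∈ (⊤ : Submodule k (Comp k H L K Λ (rep i) M)) := trivial
      rwa [← h2] at h3
    rw [eq_top_iff]
    rintro u -
    obtain ⟨z, rfl⟩ := hπ.2 u
    have h3 : z ∈ (⊤ : Submodule k (⨁ i, Comp k H L K Λ (rep i) M)) := trivial
    rwa [← h1] at h3
  have hX : IsScalarTower k H (⨁ i : ι, TPInd k H L K Λ (rep i) M N) :=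
    ⟨fun c h z => by ext i; simp only [DirectSum.smul_apply, smul_assoc]⟩
  let π' := LinearEquiv.ofBijective π hπ
  let θ' : Ind k H K M →ₗ[k] N →ₗ[k] ⨁ i : ι, TPInd k H L K Λ (rep i) M N :=
    DirectSum.toModule k ι _ (fun i => (θ i).compr₂ (DirectSum.lof k ι
      (fun i => TPInd k H L K Λ (rep i) M N) i)) ∘ₗ π'.symm.toLinearMap
  have hθ' (i : ι) (l : L) (x : CKsub k H K (rep i)) (m : M) (n : N) :
      θ' (Submodule.Quotient.mk (((l : H) * (x : H)) ⊗ₜ[k] m)) n =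
        DirectSum.of (fun i => TPInd k H L K Λ (rep i) M N) i
          (twist act (tpPair L K Λ (rep i) M N) l (ckmk k H K M (rep i) x m) n) := by
    rw [← hπ', ← hθ]
    simp only [θ', LinearMap.comp_apply, LinearEquiv.coe_coe]
    rw [show π = π'.toLinearMap from rfl, LinearEquiv.coe_coe, LinearEquiv.symm_apply_apply,
      ← DirectSum.lof_eq_of k, DirectSum.toModule_lof]
    rfl
  have hequiv : ∀ l ∈ L, ∀ (r : ℕ) (a b : Fin r → H),
      Coalgebra.comul (R := k) l = ∑ j, a j ⊗ₜ[k] b j → ∀ u n,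
      ∑ j, θ' (a j • u) (act (b j) n) = l • θ' u n := by
    intro l hl r a b hab u n
    obtain ⟨s, c, d, hc, hd, hcd⟩ := exists_fin_sum_tmul_of_mem (hL.1 l hl)
    let E (u : Ind k H K M) : H ⊗[k] H →ₗ[k] ⨁ i : ι, TPInd k H L K Λ (rep i) M N :=
      TensorProduct.lift θ' ∘ₗ TensorProduct.map
        ((LinearMap.toSpanSingleton H _ u).restrictScalars k) (act.flip n)
    have h1 : ∑ j, θ' (a j • u) (act (b j) n) = ∑ j, θ' (c j • u) (act (d j) n) := by
      have := congrArg (E u) (hab.symm.trans hcd)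
      simpa [E] using this
    rw [h1]
    have h2 := hspan (LinearMap.eqLocus
      (∑ j, θ'.flip (act (d j) n) ∘ₗ Algebra.lsmul k k _ (c j))
      (Algebra.lsmul k k _ l ∘ₗ θ'.flip n)) fun i g x m => by
        simp only [LinearMap.mem_eqLocus, LinearMap.sum_apply, LinearMap.comp_apply,
          LinearMap.flip_apply, Algebra.lsmul_coe, ← Submodule.Quotient.mk_smul,
          TensorProduct.smul_tmul', smul_eq_mul, hθ']
        have h3 (j : Fin s) := hθ' i ⟨c j * g, mul_mem (hc j) g.2⟩ x m (act (d j) n)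
        simp only [mul_assoc] at h3
        simp only [h3, smul_directSum_of, ← map_sum]
        rw [← sum_twist_mul hL hact1 hactm _ hc hd hcd g.2]
    have h3 : u ∈ (⊤ : Submodule k (Ind k H K M)) := trivial
    rw [← h2, LinearMap.mem_eqLocus] at h3
    simpa [LinearMap.sum_apply] using h3
  obtain ⟨Φ, hΦ, hΦ'⟩ := exists_lift_tensor_ind (U := Ind k H K M)
    (X := ⨁ i : ι, TPInd k H L K Λ (rep i) M N) hL ht ht' hact θ' hequiv
  let Ψ' : (⨁ i : ι, TPInd k H L K Λ (rep i) M N) →ₗ[k] Ind k H K M ⊗[k] Ind k H L N :=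
    DirectSum.toModule k ι _ Ψ
  have hΨof (i : ι) (z) : Ψ' (DirectSum.of (fun i => TPInd k H L K Λ (rep i) M N) i z) = Ψ i z := by
    rw [← DirectSum.lof_eq_of k, DirectSum.toModule_lof]
  have hΨsmul (h : H) (z) : Ψ' (h • z) = diagHom k H (Ind k H K M) (Ind k H L N) h (Ψ' z) :=
    toModule_smul _ Ψ hΨ' h z
  have hΦΨ (z) : Φ (Ψ' z) = z := by
    have h1 := directSum_eq_top (LinearMap.eqLocus (Φ ∘ₗ Ψ') LinearMap.id) fun i z => by
      have h2 := tpInd_eq_top ((LinearMap.eqLocus (Φ ∘ₗ Ψ') LinearMap.id).comap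
        (DirectSum.lof k ι (fun i => TPInd k H L K Λ (rep i) M N) i)) fun h x m n => by
          rw [Submodule.mem_comap, LinearMap.mem_eqLocus, DirectSum.lof_eq_of,
            LinearMap.comp_apply, hΨof, hΨ', hΨ, hΦ', hΦ]
          have h4 := hθ' i 1 x m n
          rw [OneMemClass.coe_one, one_mul, twist_one hact1] at h4
          rw [h4, smul_directSum_of, LinearMap.id_apply]
      have h3 : z ∈ (⊤ : Submodule k (TPInd k H L K Λ (rep i) M N)) := trivial
      rwa [← h2] at h3
    have h3 : z ∈ (⊤ : Submodule k (⨁ i, TPInd k H L K Λ (rep i) M N)) := trivial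
    rwa [← h1] at h3
  have hP (h : H) (z) (hz : z ∈ LinearMap.range Ψ') :
      diagHom k H (Ind k H K M) (Ind k H L N) h z ∈ LinearMap.range Ψ' := by
    obtain ⟨y, rfl⟩ := hz
    exact ⟨h • y, hΨsmul h y⟩
  have hsurj : LinearMap.range Ψ' = ⊤ := by
    refine eq_top_of_diagHom_mem ht ht' _ hP fun u n => ?_
    have h1 := hspan (⨅ n : N, (LinearMap.range Ψ').comap
      ((TensorProduct.mk k (Ind k H K M) (Ind k H L N)).flip
        (Submodule.Quotient.mk (1 ⊗ₜ n)))) fun i l x m => by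
        rw [Submodule.mem_iInf]
        intro n
        obtain ⟨s, c, d, hc, hd, hcd⟩ := exists_fin_sum_tmul_of_mem (hL.1 l l.2)
        let u : Ind k H K M := Submodule.Quotient.mk ((x : H) ⊗ₜ m)
        let w : Ind k H L N := Submodule.Quotient.mk (1 ⊗ₜ n)
        let E : H ⊗[k] H →ₗ[k] Ind k H K M ⊗[k] Ind k H L N := TensorProduct.map
          ((LinearMap.toSpanSingleton H _ u).restrictScalars k)
          ((LinearMap.toSpanSingleton H _ w).restrictScalars k)
        have h2 := congrArg E (sum_comul_mul_tmul_antipode hcd)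
        have h3 (j : Fin s) : E (Coalgebra.comul (R := k) (c j) *
            ((1 : H) ⊗ₜ[k] HopfAlgebra.antipode k (d j))) =
            diagHom k H _ _ (c j) (u ⊗ₜ (HopfAlgebra.antipode k (d j) • w)) := by
          obtain ⟨s, p, q, hpq⟩ := exists_fin_sum_tmul (Coalgebra.comul (R := k) (c j))
          rw [diagHom_tmul hpq, hpq]
          simp [E, Finset.sum_mul, mul_smul]
        simp only [map_sum, h3] at h2
        have h4 : (Submodule.Quotient.mk (((l : H) * (x : H)) ⊗ₜ[k] m) : Ind k H K M) ⊗ₜ[k] w =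
            E ((l : H) ⊗ₜ 1) := by
          simp [E, u, ← Submodule.Quotient.mk_smul, TensorProduct.smul_tmul']
        rw [Submodule.mem_comap]
        change (Submodule.Quotient.mk (((l : H) * (x : H)) ⊗ₜ[k] m) : Ind k H K M) ⊗ₜ[k] w ∈ _
        rw [h4, ← h2]
        refine Submodule.sum_mem _ fun j _ => hP _ _ ?_
        have h5 : HopfAlgebra.antipode k (d j) • w =
            Submodule.Quotient.mk (1 ⊗ₜ[k] ((⟨_, hL.2 _ (hd j)⟩ : L) • n)) := by
          rw [← ind_mk_mem]
          simp [w, ← Submodule.Quotient.mk_smul, TensorProduct.smul_tmul']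
        rw [h5]
        exact ⟨DirectSum.of (fun i => TPInd k H L K Λ (rep i) M N) i _,
          (hΨof i _).trans (hΨ i x m _)⟩
    have h3 : u ∈ (⊤ : Submodule k (Ind k H K M)) := trivial
    rw [← h1, Submodule.mem_iInf] at h3
    exact h3 n
  let e := LinearEquiv.ofBijective Ψ'
    ⟨Function.LeftInverse.injective hΦΨ, LinearMap.range_eq_top.1 hsurj⟩
  refine ⟨e.symm, fun h u w r h₁ h₂ hh => ?_⟩
  rw [← diagHom_tmul hh, LinearEquiv.symm_apply_eq]
  refine Eq.trans ?_ (hΨsmul h (e.symm (u ⊗ₜ w))).symm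
  exact congrArg _ (e.apply_symm_apply _).symm

end Statements

end

end MackeyPaper
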